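/- arXiv:1407.6258 — 2 statements merged into one kernel-verified Lean document; each statement's English description precedes it below -/
import Mathlib

section
/- Fix n ≥ 0. The map Φ sending a stable x-family f = (f_{2m+1})_{m≥0} satisfying equation (E_x) with every f_{2m+1} homogeneous of degree n to the family g = (g_m)_{m≥0} defined by g_m(y₁,…,y_m) := f_{2m+1}(0,y₁,0,y₂,0,…,0,y_m,0) (all odd-indexed variables x_{2i+1} set to 0 and x_{2i} set to y_i) is a ℚ-linear bijection from the space of such stable x-families onto the space of quasi-symmetric stable families g with every g_m homogeneous of degree n. -/
open MvPolynomial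
open scoped Classical

noncomputable section

/-- The order condition for a function `r : α → Fin N` (labels `0,…,N-1` standing for
`1,…,N`) with respect to a rank function `ht` on the poset `α`. -/
def OrderCond {α : Type} [PartialOrder α] (ht : α → ℕ) {N : ℕ} (r : α → Fin N) : Prop :=
  (∀ x y : α, x ≤ y → r x ≤ r y) ∧ ∀ x y : α, x < y → Odd (ht x) → r x < r y

/-- `ht` is a rank function on the poset `α`: minimal elements have height `0` and
covering relations increase the height by exactly one. -/
def IsRanked {α : Type} [PartialOrder α] (ht : α → ℕ) : Prop :=
  (∀ x : α, IsMin x → ht x = 0) ∧ ∀ x y : α, x ⋖ y → ht y = ht x + 1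

/-- The polynomial `N_P^(m)`, an element of `ℚ[p₁,…,p_{m+1},q₁,…,q_m]`;
the variable `Sum.inl j` is `p_{j+1}` and `Sum.inr j` is `q_{j+1}` (0-indexed). -/
def NP (α : Type) [Fintype α] [PartialOrder α] (ht : α → ℕ) (m : ℕ) :
    MvPolynomial (ℕ ⊕ ℕ) ℚ :=
  ∑ r : α → Fin (m + 1),
    if OrderCond ht r ∧ ∀ v, Odd (ht v) → (r v : ℕ) < m then
      ∏ v : α, if Even (ht v) then X (Sum.inl (r v : ℕ)) else X (Sum.inr (r v : ℕ))
    else 0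

/-- The polynomial `F_P^(N)`, an element of `ℚ[x₁,…,x_N]`; variable `j` is `x_{j+1}`. -/
def FP (α : Type) [Fintype α] [PartialOrder α] (ht : α → ℕ) (N : ℕ) :
    MvPolynomial ℕ ℚ :=
  ∑ r : α → Fin N, if OrderCond ht r then ∏ v : α, X (r v : ℕ) else 0

/-- A stable x-family `(f_{2m+1})_{m ≥ 0}`: `f m` stands for `f_{2m+1} ∈ ℚ[x₁,…,x_{2m+1}]`
(variable `k` is `x_{k+1}`), with `f_{2m+3}(x₁,…,x_{2m+1},0,0) = f_{2m+1}`. -/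
def IsStableX (f : ℕ → MvPolynomial ℕ ℚ) : Prop :=
  (∀ m, (f m).vars ⊆ Finset.range (2 * m + 1)) ∧
  ∀ m, aeval (fun k => if k < 2 * m + 1 then (X k : MvPolynomial ℕ ℚ) else 0) (f (m + 1)) = f m

/-- Equation (E_x): for all (paper) `m ≥ 1` and `1 ≤ i ≤ 2m`, substituting `x_{i+1} := x_i`
in `f_{2m+1}` yields `f_{2m-1}(x₁,…,x_{i-1},x_{i+2},…,x_{2m+1})`.  Here `m, i` are 0-indexed:
`f (m+1)` is `f_{2m+3}` and the Lean variable `i` is the paper variable `i+1`. -/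
def SatisfiesEx (f : ℕ → MvPolynomial ℕ ℚ) : Prop :=
  ∀ m i : ℕ, i < 2 * m + 2 →
    aeval (fun k => if k = i + 1 then (X i : MvPolynomial ℕ ℚ) else X k) (f (m + 1)) =
    aeval (fun k => if k < i then (X k : MvPolynomial ℕ ℚ) else X (k + 2)) (f m)

/-- A stable pq-family `(h_m)_{m ≥ 0}` with `h m ∈ ℚ[p₁,…,p_{m+1},q₁,…,q_m]`
(`Sum.inl j` is `p_{j+1}`, `Sum.inr j` is `q_{j+1}`), such that substituting
`p_{m+2} := 0` and `q_{m+1} := 0` in `h (m+1)` yields `h m`. -/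
def IsStablePQ (h : ℕ → MvPolynomial (ℕ ⊕ ℕ) ℚ) : Prop :=
  (∀ m, (h m).vars ⊆ (Finset.range (m + 1)).image Sum.inl ∪ (Finset.range m).image Sum.inr) ∧
  ∀ m, aeval (Sum.elim
      (fun j => if j = m + 1 then 0 else (X (Sum.inl j) : MvPolynomial (ℕ ⊕ ℕ) ℚ))
      (fun j => if j = m then 0 else X (Sum.inr j))) (h (m + 1)) = h m

/-- Equations (E_pq) for a pq-family; the Lean index `i ≤ m` is the paper index `i+1 ≤ m+1`
and `h (m+1)`, `h m` are the paper `h_m`, `h_{m-1}`.  The first equation sets `q_{i+1} := 0`,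
the second sets `p_{i+1} := 0`. -/
def SatisfiesEpq (h : ℕ → MvPolynomial (ℕ ⊕ ℕ) ℚ) : Prop :=
  ∀ m i : ℕ, i ≤ m →
    (aeval (Sum.elim (fun j => (X (Sum.inl j) : MvPolynomial (ℕ ⊕ ℕ) ℚ))
        (fun j => if j = i then 0 else X (Sum.inr j))) (h (m + 1)) =
      aeval (Sum.elim
        (fun j => if j < i then (X (Sum.inl j) : MvPolynomial (ℕ ⊕ ℕ) ℚ)
          else if j = i then X (Sum.inl i) + X (Sum.inl (i + 1)) else X (Sum.inl (j + 1)))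
        (fun j => if j < i then X (Sum.inr j) else X (Sum.inr (j + 1)))) (h m)) ∧
    (aeval (Sum.elim (fun j => if j = i then 0 else (X (Sum.inl j) : MvPolynomial (ℕ ⊕ ℕ) ℚ))
        (fun j => X (Sum.inr j))) (h (m + 1)) =
      aeval (Sum.elim
        (fun j => if j < i then (X (Sum.inl j) : MvPolynomial (ℕ ⊕ ℕ) ℚ)
          else X (Sum.inl (j + 1)))
        (fun j => if j + 1 < i then X (Sum.inr j)
          else if j + 1 = i then X (Sum.inr j) + X (Sum.inr (j + 1))
          else X (Sum.inr (j + 1)))) (h m))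

/-- The inverse substitution of (⋆): the x-variable of (0-indexed) Lean index `k`
(paper `x_{k+1}`) expressed in the `p`/`q` variables:
`x_{2i+1} = q_{i+1}+⋯+q_m+p_{i+1}+⋯+p_{m+1}` and `x_{2i} = q_i+⋯+q_m+p_{i+1}+⋯+p_{m+1}`. -/
def xToPQ (m k : ℕ) : MvPolynomial (ℕ ⊕ ℕ) ℚ :=
  if k % 2 = 0 then
    (∑ j ∈ Finset.Ico (k / 2) m, X (Sum.inr j)) + ∑ j ∈ Finset.Ico (k / 2) (m + 1), X (Sum.inl j)
  else
    (∑ j ∈ Finset.Ico (k / 2) m, X (Sum.inr j)) +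
      ∑ j ∈ Finset.Ico (k / 2 + 1) (m + 1), X (Sum.inl j)

/-- The substitution (⋆): `p_i := x_{2i-1} - x_{2i}` (`1 ≤ i ≤ m`),
`q_i := x_{2i} - x_{2i+1}` (`1 ≤ i ≤ m`), `p_{m+1} := x_{2m+1}` (all 0-indexed in Lean). -/
def pqToX (m : ℕ) : ℕ ⊕ ℕ → MvPolynomial ℕ ℚ :=
  Sum.elim (fun j => if j = m then X (2 * m) else X (2 * j) - X (2 * j + 1))
    (fun j => X (2 * j + 1) - X (2 * j + 2))

/-- The substitution sending every odd-indexed (paper) variable `x_{2i+1}` to `0`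
and `x_{2i}` to `y_i` (Lean variable `i-1`). -/
def oddZero : ℕ → MvPolynomial ℕ ℚ := fun k => if k % 2 = 0 then 0 else X (k / 2)

/-- A quasi-symmetric stable family `(g_m)_{m≥0}` with `g m ∈ ℚ[y₁,…,y_m]`
(variable `k` is `y_{k+1}`): `g_{m+1}(y₁,…,y_m,0) = g_m`, and the coefficient of
`y_{a₁}^{c₁}⋯y_{a_r}^{c_r}` (for `a₁ < ⋯ < a_r ≤ m`, `c_j > 0`) equals the coefficient
of `y₁^{c₁}⋯y_r^{c_r}`. -/
def IsQSymStable (g : ℕ → MvPolynomial ℕ ℚ) : Prop :=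
  (∀ m, (g m).vars ⊆ Finset.range m) ∧
  (∀ m, aeval (fun k => if k = m then 0 else (X k : MvPolynomial ℕ ℚ)) (g (m + 1)) = g m) ∧
  ∀ (m r : ℕ) (a c : Fin r → ℕ), StrictMono a → (∀ j, a j < m) → (∀ j, 0 < c j) →
    coeff (∑ j, Finsupp.single (a j) (c j)) (g m) =
    coeff (∑ j : Fin r, Finsupp.single (j : ℕ) (c j)) (g m)

/-! ### Evaluation of families on lists -/

section Lists

variable {R : Type*} [CommRing R] [Algebra ℚ R]

/-- Value of a family on a finite list of arguments, padded by zeros. -/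
def psi (f : ℕ → MvPolynomial ℕ ℚ) (l : List R) : R :=
  aeval (fun k => l.getD k 0) (f l.length)

lemma aeval_congr_vars {p : MvPolynomial ℕ ℚ} {u v : ℕ → R}
    (h : ∀ k ∈ p.vars, u k = v k) : aeval u p = aeval v p := by
  rw [aeval_def, aeval_def]
  exact eval₂Hom_congr' rfl (fun i hi _ => h i hi) rfl

lemma stab_one {f : ℕ → MvPolynomial ℕ ℚ} (hf : IsStableX f) (m : ℕ) (u : ℕ → R)
    (hu : ∀ k, 2 * m + 1 ≤ k → u k = 0) : aeval u (f (m + 1)) = aeval u (f m) := by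
  conv_rhs => rw [← hf.2 m]
  rw [← AlgHom.comp_apply, comp_aeval]
  congr 2
  funext k
  split_ifs with h
  · simp
  · simp [hu k (by omega)]

lemma stab_many {f : ℕ → MvPolynomial ℕ ℚ} (hf : IsStableX f) (m M : ℕ) (hM : m ≤ M) (u : ℕ → R)
    (hu : ∀ k, 2 * m + 1 ≤ k → u k = 0) : aeval u (f M) = aeval u (f m) := by
  induction M, hM using Nat.le_induction with
  | base => rfl
  | succ M hM ih => rw [stab_one hf M u (fun k hk => hu k (by omega)), ih]

lemma psi_eq {f : ℕ → MvPolynomial ℕ ℚ} (hf : IsStableX f) (l : List R) (M : ℕ)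
    (hM : l.length ≤ 2 * M + 1) : psi f l = aeval (fun k => l.getD k 0) (f M) := by
  unfold psi
  have key : ∀ a b : ℕ, a ≤ b → l.length ≤ 2 * a + 1 →
      aeval (fun k => l.getD k 0) (f b) = aeval (fun k => l.getD k 0) (f a) := by
    intro a b hab ha
    apply stab_many hf _ _ hab
    intro k hk
    exact List.getD_eq_default _ _ (by omega)
  rcases le_total l.length M with h | h
  · exact (key _ _ h (by omega)).symm
  · exact key _ _ h hM

lemma psi_cancel {f : ℕ → MvPolynomial ℕ ℚ} (hf : IsStableX f) (hE : SatisfiesEx f)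
    (a b : List R) (t : R) : psi f (a ++ t :: t :: b) = psi f (a ++ b) := by
  rw [psi_eq hf _ (a.length + b.length + 1) (by simp; omega),
    psi_eq hf (a ++ b) (a.length + b.length) (by simp; omega)]
  have h := congrArg (aeval (fun k => (a ++ t :: t :: b).getD k 0) : MvPolynomial ℕ ℚ →ₐ[ℚ] R)
    (hE (a.length + b.length) a.length (by omega))
  rw [← AlgHom.comp_apply, comp_aeval, ← AlgHom.comp_apply, comp_aeval] at h
  refine Eq.trans ?_ (h.trans ?_)
  · congr 2
    funext k
    split_ifs with hk
    · subst hk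
      simp
    · simp
  · congr 2
    funext k
    split_ifs with hk
    · simp [List.getElem?_append, hk]
    · simp only [aeval_X]
      rw [List.getD_append_right _ _ _ _ (by omega), List.getD_append_right _ _ _ _ (by omega)]
      rw [show k + 2 - a.length = k - a.length + 1 + 1 by omega]
      simp

lemma psi_map {S : Type*} [CommRing S] [Algebra ℚ S] (f : ℕ → MvPolynomial ℕ ℚ) (φ : R →ₐ[ℚ] S)
    (l : List R) : φ (psi f l) = psi f (l.map φ) := by
  unfold psi
  rw [← AlgHom.comp_apply, comp_aeval, List.length_map]
  congr 2
  funext k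
  simp only [List.getD_eq_getElem?_getD, List.getElem?_map]
  cases l[k]? <;> simp

/-- Encoding of a signed word: `+t` becomes `t, 0` and `-t` becomes `0, t`. -/
def enc (w : List (Bool × R)) : List R :=
  w.flatMap (fun p => if p.1 then [p.2, 0] else [0, p.2])

/-- Negative letters. -/
def neg (l : List R) : List (Bool × R) := l.map (fun t => (false, t))

set_option linter.unusedSectionVars false

@[simp] lemma enc_append (a b : List (Bool × R)) : enc (a ++ b) = enc a ++ enc b := by
  simp [enc]

@[simp] lemma enc_nil : enc ([] : List (Bool × R)) = [] := rfl

@[simp] lemma enc_pos (t : R) (b : List (Bool × R)) : enc ((true, t) :: b) = t :: 0 :: enc b := by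
  simp [enc]

@[simp] lemma enc_neg (t : R) (b : List (Bool × R)) : enc ((false, t) :: b) = 0 :: t :: enc b := by
  simp [enc]

lemma enc_map {S : Type*} [CommRing S] [Algebra ℚ S] (φ : R →ₐ[ℚ] S) (w : List (Bool × R)) :
    (enc w).map φ = enc (w.map (fun p => (p.1, φ p.2))) := by
  induction w with
  | nil => rfl
  | cons p w ih =>
    obtain ⟨s, t⟩ := p
    cases s <;> simp [ih]

lemma H_cancel {f : ℕ → MvPolynomial ℕ ℚ} (hf : IsStableX f) (hE : SatisfiesEx f)
    (a b : List (Bool × R)) (t : R) :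
    psi f (enc (a ++ (true, t) :: (false, t) :: b)) = psi f (enc (a ++ b)) := by
  simp only [enc_append, enc_pos, enc_neg]
  have h1 := psi_cancel hf hE (enc a ++ [t]) (t :: enc b) 0
  have h2 := psi_cancel hf hE (enc a) (enc b) t
  simp only [List.append_assoc, List.singleton_append] at h1
  rw [h1, h2]

lemma H_zero {f : ℕ → MvPolynomial ℕ ℚ} (hf : IsStableX f) (hE : SatisfiesEx f)
    (a b : List (Bool × R)) :
    psi f (enc (a ++ (false, 0) :: b)) = psi f (enc (a ++ b)) := by
  simp only [enc_append, enc_neg]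
  exact psi_cancel hf hE _ _ _

lemma H_filter {f : ℕ → MvPolynomial ℕ ℚ} (hf : IsStableX f) (hE : SatisfiesEx f)
    (P : ℕ → Prop) (θ : ℕ → R) (hθ : ∀ k, ¬ P k → θ k = 0) (l : List ℕ)
    (a b : List (Bool × R)) :
    psi f (enc (a ++ neg (l.map θ) ++ b)) =
      psi f (enc (a ++ neg ((l.filter (fun k => decide (P k))).map θ) ++ b)) := by
  induction l generalizing a with
  | nil => rfl
  | cons k l ih =>
    by_cases hk : P k
    · have := ih (a ++ [(false, θ k)])
      simpa [neg, List.filter_cons, hk] using this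
    · have := ih a
      have h0 := H_zero hf hE a (neg (l.map θ) ++ b)
      simp only [List.append_assoc] at this
      rw [this] at h0
      simpa [neg, List.filter_cons, hk, hθ k hk] using h0

lemma enc_neg_getD (l : List R) (k : ℕ) :
    (enc (neg l)).getD k 0 = if k % 2 = 0 then 0 else l.getD (k / 2) 0 := by
  induction l generalizing k with
  | nil => simp [neg]
  | cons t l ih =>
    have e : enc (neg (t :: l)) = 0 :: t :: enc (neg l) := by simp [neg]
    rw [e]
    match k with
    | 0 => simp
    | 1 => simp
    | k + 2 =>
      rw [List.getD_cons_succ, List.getD_cons_succ, ih k]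
      rw [show (k + 2) % 2 = k % 2 by omega, show (k + 2) / 2 = k / 2 + 1 by omega,
        List.getD_cons_succ]

lemma enc_neg_length (l : List R) : (enc (neg l)).length = 2 * l.length := by
  induction l with
  | nil => rfl
  | cons t l ih =>
    have e : enc (neg (t :: l)) = 0 :: t :: enc (neg l) := by simp [neg]
    rw [e]; simp [ih]; omega

lemma psi_neg {f : ℕ → MvPolynomial ℕ ℚ} (hf : IsStableX f) (l : List R) (m : ℕ)
    (hl : l.length ≤ m) :
    psi f (enc (neg l)) = aeval (fun k => l.getD k 0) (aeval oddZero (f m)) := by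
  rw [psi_eq hf _ m (by rw [enc_neg_length]; omega), ← AlgHom.comp_apply, comp_aeval]
  congr 2
  funext k
  rw [enc_neg_getD, oddZero]
  split_ifs <;> simp

/-- Any list is equivalent to an encoded word. -/
lemma psi_enc {f : ℕ → MvPolynomial ℕ ℚ} (hf : IsStableX f) (hE : SatisfiesEx f) (l : List R) :
    ∃ w, psi f l = psi f (enc w) := by
  suffices h : ∀ (N : ℕ) (l : List R), l.length ≤ N → ∀ a : List (Bool × R),
      ∃ w, psi f (enc a ++ l) = psi f (enc w) by
    simpa using h _ l le_rfl []
  intro N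
  induction N with
  | zero =>
    intro l hl a
    exact ⟨a, by rw [List.length_eq_zero_iff.1 (by omega : l.length = 0)]; simp⟩
  | succ N ih =>
    intro l hl a
    match l, hl with
    | [], _ => exact ⟨a, by simp⟩
    | [t], _ =>
      refine ⟨a ++ [(true, t)], ?_⟩
      rw [psi_eq hf (enc a ++ [t]) ((enc a).length + 2) (by simp; omega),
        psi_eq hf (enc (a ++ [(true, t)])) ((enc a).length + 2) (by simp; omega)]
      congr 2
      funext k
      simp only [enc_append, enc_pos, enc_nil]
      have : enc a ++ [t, 0] = (enc a ++ [t]) ++ [0] := by simp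
      rw [this]
      rcases lt_or_ge k (enc a ++ [t]).length with h | h
      · rw [List.getD_append _ _ _ _ h]
      · rw [List.getD_append_right _ _ _ _ h, List.getD_eq_default _ _ h]
        cases (k - (enc a ++ [t]).length) <;> simp
    | s :: t :: l, hl =>
      obtain ⟨w, hw⟩ := ih l (by simp at hl; omega) (a ++ [(true, s), (false, t)])
      refine ⟨w, ?_⟩
      rw [← hw]
      have := psi_cancel hf hE (enc a ++ [s]) (t :: l) 0
      simp only [List.append_assoc, List.singleton_append] at this
      rw [← this]
      simp

end Lists
/-! ### Injectivity -/

lemma alt_sum_zero (p : MvPolynomial ℕ ℚ) (n : ℕ) (hp : p.totalDegree ≤ n) (T : Finset ℕ)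
    (hT : n < T.card) (t : ℚ) :
    ∑ S ∈ T.powerset, (-1 : ℚ) ^ S.card * aeval (fun k => if k ∈ S then t else 0) p = 0 := by
  have hmon : ∀ d ∈ p.support, ∑ S ∈ T.powerset,
      (-1 : ℚ) ^ S.card * aeval (fun k => if k ∈ S then t else 0) (monomial d (coeff d p)) = 0 := by
    intro d hd
    have h1 : ∃ i ∈ T, d i = 0 := by
      by_contra hcon
      push Not at hcon
      have hsub : T ⊆ d.support := fun i hi => Finsupp.mem_support_iff.2 (hcon i hi)
      have h2 : d.support.card ≤ d.sum (fun _ e => e) := by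
        rw [Finsupp.sum, Finset.card_eq_sum_ones]
        exact Finset.sum_le_sum fun i hi => Nat.one_le_iff_ne_zero.2 (Finsupp.mem_support_iff.1 hi)
      have h3 := le_totalDegree hd
      have := Finset.card_le_card hsub
      omega
    obtain ⟨i, hi, hdi⟩ := h1
    rw [← Finset.insert_erase hi, Finset.sum_powerset_insert (Finset.notMem_erase i T),
      ← Finset.sum_add_distrib]
    apply Finset.sum_eq_zero
    intro S hS
    have hiS : i ∉ S := fun h => Finset.notMem_erase i T (Finset.mem_powerset.1 hS h)
    rw [Finset.card_insert_of_notMem hiS]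
    have : aeval (fun k => if k ∈ insert i S then t else (0 : ℚ)) (monomial d (coeff d p)) =
        aeval (fun k => if k ∈ S then t else (0 : ℚ)) (monomial d (coeff d p)) := by
      rw [aeval_monomial, aeval_monomial]
      congr 1
      apply Finset.prod_congr rfl
      intro k hk
      have hki : k ≠ i := by
        rintro rfl
        exact Finsupp.mem_support_iff.1 hk hdi
      simp [Finset.mem_insert, hki]
    rw [this]
    ring
  conv_lhs =>
    enter [2, S]
    rw [p.as_sum, map_sum, Finset.mul_sum]
  rw [Finset.sum_comm]
  exact Finset.sum_eq_zero hmon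

lemma totalDegree_aeval_le_of {p : MvPolynomial ℕ ℚ} {n : ℕ} (hp : p.IsHomogeneous n)
    (h : ℕ → MvPolynomial ℕ ℚ) (hh : ∀ k, (h k).totalDegree ≤ 1) :
    (aeval h p).totalDegree ≤ n := by
  rw [p.as_sum, map_sum]
  apply totalDegree_finsetSum_le
  intro d hd
  rw [aeval_monomial]
  refine (totalDegree_mul _ _).trans ?_
  have h0 : (algebraMap ℚ (MvPolynomial ℕ ℚ) (coeff d p)).totalDegree = 0 := by
    rw [algebraMap_eq, totalDegree_C]
  rw [h0, zero_add]
  refine (totalDegree_finsetProd _ _).trans ?_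
  have hd' := hp (mem_support_iff.1 hd)
  rw [← hd', Finsupp.weight_apply, Finsupp.sum]
  apply Finset.sum_le_sum
  intro i hi
  refine (totalDegree_pow _ _).trans ?_
  simpa using Nat.mul_le_mul_left (d i) (hh i)

lemma psi_totalDegree {f : ℕ → MvPolynomial ℕ ℚ} {n : ℕ} (hn : ∀ m, (f m).IsHomogeneous n)
    (l : List (MvPolynomial ℕ ℚ)) (hl : ∀ q ∈ l, q.totalDegree ≤ 1) :
    (psi f l).totalDegree ≤ n := by
  apply totalDegree_aeval_le_of (hn _)
  intro k
  rcases lt_or_ge k l.length with h | h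
  · rw [List.getD_eq_getElem _ _ h]
    exact hl _ (List.getElem_mem h)
  · rw [List.getD_eq_default _ _ h]
    simp

lemma H_alt {f : ℕ → MvPolynomial ℕ ℚ} (hf : IsStableX f) (hE : SatisfiesEx f) {n : ℕ}
    (hn : ∀ m, (f m).IsHomogeneous n) (a b : List (Bool × ℚ)) (t : ℚ) :
    ∑ S ∈ (Finset.range (n + 1)).powerset, (-1 : ℚ) ^ S.card *
      psi f (enc (a ++ neg (List.replicate S.card t) ++ b)) = 0 := by
  let cc : List (Bool × ℚ) → List (Bool × MvPolynomial ℕ ℚ) :=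
    fun w => w.map (fun p => (p.1, C p.2))
  let W : List (Bool × MvPolynomial ℕ ℚ) :=
    cc a ++ neg ((List.range (n + 1)).map (fun k => (X k : MvPolynomial ℕ ℚ))) ++ cc b
  have hdegw : ∀ w : List (Bool × MvPolynomial ℕ ℚ), (∀ q ∈ w, q.2.totalDegree ≤ 1) →
      ∀ q ∈ enc w, q.totalDegree ≤ 1 := by
    intro w
    induction w with
    | nil => simp
    | cons p w ih =>
      obtain ⟨s, q⟩ := p
      intro h
      have h1 := h (s, q) (by simp)
      have h2 := ih (fun q hq => h q (by simp [hq]))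
      cases s
      · simpa using ⟨h1, h2⟩
      · simpa using ⟨h1, h2⟩
  have hdeg : (psi f (enc W)).totalDegree ≤ n := by
    apply psi_totalDegree hn
    apply hdegw
    intro q hq
    simp only [W, cc, neg, List.mem_append, List.mem_map] at hq
    rcases hq with (⟨x, _, rfl⟩ | ⟨x, ⟨k, _, rfl⟩, rfl⟩) | ⟨x, _, rfl⟩
    · simp
    · simp
    · simp
  have key := alt_sum_zero _ n hdeg (Finset.range (n + 1)) (by simp) t
  rw [← key]
  apply Finset.sum_congr rfl
  intro S hS
  congr 1
  rw [psi_map, enc_map]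
  have e1 : W.map (fun p => (p.1, (aeval (fun k => if k ∈ S then t else (0 : ℚ)) :
      MvPolynomial ℕ ℚ →ₐ[ℚ] ℚ) p.2)) =
      a ++ neg ((List.range (n + 1)).map (fun k => if k ∈ S then t else 0)) ++ b := by
    simp [W, cc, neg, Function.comp_def]
  rw [e1, H_filter hf hE (fun k => k ∈ S) _ (fun k hk => if_neg hk)]
  congr 5
  symm
  rw [List.eq_replicate_iff]
  constructor
  · rw [List.length_map, ← List.toFinset_card_of_nodup (List.nodup_range.filter _)]
    congr 1
    ext k
    have : k ∈ S → k < n + 1 := fun hk => Finset.mem_range.1 (Finset.mem_powerset.1 hS hk)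
    simp only [List.mem_toFinset, List.mem_filter, List.mem_range, decide_eq_true_eq]
    tauto
  · intro x hx
    simp only [List.mem_map, List.mem_filter, decide_eq_true_eq] at hx
    obtain ⟨k, ⟨_, hk⟩, rfl⟩ := hx
    simp [hk]

lemma H_vanish {f : ℕ → MvPolynomial ℕ ℚ} (hf : IsStableX f) (hE : SatisfiesEx f) {n : ℕ}
    (hn : ∀ m, (f m).IsHomogeneous n) (h0 : ∀ m, aeval oddZero (f m) = 0) (N : ℕ) :
    ∀ w : List (Bool × ℚ), (w.countP (fun p => p.1)) = N → psi f (enc w) = 0 := by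
  induction N with
  | zero =>
    intro w hw
    rw [List.countP_eq_zero] at hw
    have : w = neg (w.map Prod.snd) := by
      rw [neg, List.map_map]
      refine (List.map_id w).symm.trans (List.map_congr_left ?_)
      rintro ⟨s, t⟩ hp
      have := hw _ hp
      simp at this
      simp [this]
    rw [this, psi_neg hf _ _ le_rfl, h0, map_zero]
  | succ N ih =>
    intro w hw
    have hex : ∃ p ∈ w, p.1 = true := by
      rw [← List.countP_pos_iff (p := fun p : Bool × ℚ => p.1)]
      omega
    obtain ⟨⟨s, t⟩, hp, rfl⟩ := hex
    obtain ⟨a, b, rfl⟩ := List.append_of_mem hp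
    have key := H_alt hf hE hn (a ++ [(true, t)]) b t
    rw [Finset.sum_eq_single_of_mem ∅ (by simp)] at key
    · simpa [neg] using key
    · intro S _ hS
      obtain ⟨j, hj⟩ : ∃ j, S.card = j + 1 :=
        ⟨S.card - 1, by have := Finset.card_pos.2 (Finset.nonempty_iff_ne_empty.2 hS); omega⟩
      have e : a ++ [(true, t)] ++ neg (List.replicate S.card t) ++ b =
          a ++ (true, t) :: (false, t) :: (neg (List.replicate j t) ++ b) := by
        rw [hj, List.replicate_succ]; simp [neg]
      rw [e, H_cancel hf hE, ih, mul_zero]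
      simp [List.countP_append, neg, List.countP_replicate] at hw ⊢
      omega

lemma f_zero {f : ℕ → MvPolynomial ℕ ℚ} (hf : IsStableX f) (hE : SatisfiesEx f) {n : ℕ}
    (hn : ∀ m, (f m).IsHomogeneous n) (h0 : ∀ m, aeval oddZero (f m) = 0) (m : ℕ) : f m = 0 := by
  apply MvPolynomial.funext
  intro u
  rw [map_zero]
  obtain ⟨w, hw⟩ := psi_enc hf hE ((List.range (2 * m + 1)).map u)
  rw [H_vanish hf hE hn h0 _ w rfl, psi_eq hf _ m (by simp)] at hw
  rw [← hw, ← MvPolynomial.coe_aeval_eq_eval]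
  apply aeval_congr_vars
  intro k hk
  have := hf.1 m hk
  rw [Finset.mem_range] at this
  simp [this]
/-! ### The image is quasi-symmetric -/

lemma filter_range_eq {r m : ℕ} (a : Fin r → ℕ) (ha : StrictMono a) (hm : ∀ j, a j < m)
    (P : ℕ → Prop) (hP : ∀ k, P k ↔ k ∈ Set.range a) :
    (List.range m).filter (fun k => decide (P k)) = List.ofFn a := by
  apply List.Perm.eq_of_pairwise (le := (· < ·))
  · intro x y _ _ h1 h2
    exact absurd h1 (by omega)
  · exact List.pairwise_lt_range.filter _
  · rw [List.pairwise_ofFn]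
    intro i j hij
    exact ha hij
  · rw [List.perm_ext_iff_of_nodup (List.nodup_range.filter _)
      (List.nodup_ofFn.2 ha.injective)]
    intro k
    simp only [List.mem_filter, List.mem_range, decide_eq_true_eq, hP, List.mem_ofFn]
    constructor
    · exact fun h => h.2
    · rintro ⟨j, rfl⟩
      exact ⟨hm j, j, rfl⟩

lemma mapDomain_eq_sum {r : ℕ} (a c : Fin r → ℕ) :
    (Finsupp.equivFunOnFinite.symm c).mapDomain a = ∑ j, Finsupp.single (a j) (c j) := by
  rw [Finsupp.mapDomain, Finsupp.sum_fintype]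
  · rfl
  · simp

lemma kill_g {f : ℕ → MvPolynomial ℕ ℚ} (hf : IsStableX f) (hE : SatisfiesEx f) {r m : ℕ}
    (a : Fin r → ℕ) (ha : StrictMono a) (hm : ∀ j, a j < m) :
    killCompl ha.injective (aeval oddZero (f m)) =
      psi f (enc (neg (List.ofFn (fun j : Fin r => (X j : MvPolynomial (Fin r) ℚ))))) := by
  set θ : ℕ → MvPolynomial (Fin r) ℚ := fun i => if h : i ∈ Set.range a then
    X ((Equiv.ofInjective a ha.injective).symm ⟨i, h⟩) else 0 with hθ
  have hθa : ∀ j, θ (a j) = X j := by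
    intro j
    rw [hθ]
    simp only [Set.mem_range, exists_apply_eq_apply, dif_pos]
    rw [Equiv.ofInjective_symm_apply]
  have h1 : killCompl ha.injective (aeval oddZero (f m)) = aeval θ (aeval oddZero (f m)) := by
    simp only [killCompl, hθ]
    congr!
  have h2 := H_filter hf hE (fun k => k ∈ Set.range a) θ (fun k hk => dif_neg hk)
    (List.range m) [] []
  rw [filter_range_eq a ha hm _ (fun k => Iff.rfl), List.map_ofFn] at h2
  have h3 : θ ∘ a = fun j => X j := funext hθa
  rw [h3] at h2
  simp only [List.nil_append, List.append_nil] at h2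
  rw [← h2, psi_neg hf _ m (by simp), h1]
  have hz : ∀ k, m ≤ k → θ k = 0 := by
    intro k hk
    apply dif_neg
    rintro ⟨j, rfl⟩
    have := hm j
    omega
  congr 2
  funext k
  rcases lt_or_ge k m with h | h
  · simp [h]
  · rw [hz k h, List.getD_eq_default _ _ (by simpa using h)]

lemma phi_vars {f : ℕ → MvPolynomial ℕ ℚ} (hf : IsStableX f) (m : ℕ) :
    (aeval oddZero (f m)).vars ⊆ Finset.range m := by
  intro j hj
  obtain ⟨i, hi, hji⟩ := mem_vars_bind₁ oddZero (f m) hj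
  have := Finset.mem_range.1 (hf.1 m hi)
  unfold oddZero at hji
  split_ifs at hji with h
  · simp at hji
  · rw [vars_X, Finset.mem_singleton] at hji
    rw [Finset.mem_range]
    omega

lemma phi_qsym {f : ℕ → MvPolynomial ℕ ℚ} (hf : IsStableX f) (hE : SatisfiesEx f) :
    IsQSymStable (fun m => aeval oddZero (f m)) := by
  refine ⟨phi_vars hf, ?_, ?_⟩
  · intro m
    simp only
    have h1 : aeval (fun k => if k = m then 0 else (X k : MvPolynomial ℕ ℚ))
        (aeval oddZero (f (m + 1))) =
        aeval (fun k => if k < m then (X k : MvPolynomial ℕ ℚ) else 0)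
        (aeval oddZero (f (m + 1))) := by
      apply aeval_congr_vars
      intro k hk
      have := Finset.mem_range.1 (phi_vars hf (m + 1) hk)
      by_cases h : k = m
      · simp [h]
      · simp [h, show k < m by omega]
    have h2 : aeval (fun k => if k < m then (X k : MvPolynomial ℕ ℚ) else 0)
        (aeval oddZero (f m)) = aeval oddZero (f m) := by
      conv_rhs => rw [← aeval_X_left_apply (aeval oddZero (f m))]
      apply aeval_congr_vars
      intro k hk
      have := Finset.mem_range.1 (phi_vars hf m hk)
      simp [this]
    rw [h1, ← h2, ← AlgHom.comp_apply, comp_aeval, ← AlgHom.comp_apply, comp_aeval]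
    apply stab_one hf
    intro k hk
    unfold oddZero
    split_ifs with h
    · simp
    · simp [show ¬ (k / 2 < m) by omega]
  · intro m r a c ha hm hc
    have hv : StrictMono (fun j : Fin r => (j : ℕ)) := fun i j h => h
    have hv' : ∀ j : Fin r, (j : ℕ) < m := by
      intro j
      have : ∀ k : ℕ, ∀ hk : k < r, k ≤ a ⟨k, hk⟩ := by
        intro k
        induction k with
        | zero => simp
        | succ k ih =>
          intro hk
          have h1 := ih (by omega)
          have h2 : a ⟨k, by omega⟩ < a ⟨k + 1, hk⟩ := ha (by simp [Fin.lt_def])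
          omega
      have := this j j.2
      have := hm j
      simp only [Fin.eta] at *
      omega
    rw [← mapDomain_eq_sum a c, ← mapDomain_eq_sum (fun j : Fin r => (j : ℕ)) c]
    have e1 := coeff_killCompl (p := aeval oddZero (f m)) ha.injective
      (s := Finsupp.equivFunOnFinite.symm c)
    have e2 := coeff_killCompl (p := aeval oddZero (f m)) hv.injective
      (s := Finsupp.equivFunOnFinite.symm c)
    rw [kill_g hf hE a ha hm] at e1
    rw [kill_g hf hE _ hv hv'] at e2
    exact e1.symm.trans e2

lemma phi_hom {p : MvPolynomial ℕ ℚ} {n : ℕ} (hp : p.IsHomogeneous n) :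
    (aeval oddZero p).IsHomogeneous n := by
  have := hp.aeval oddZero (n := 1) (fun k => by
    unfold oddZero
    split_ifs
    · exact isHomogeneous_zero _ _ _
    · exact isHomogeneous_X _ _)
  simpa using this
/-! ### Surjectivity -/

/-- Words. -/
abbrev Wd := FreeMonoid ℕ

/-- The word `b_j`. -/
def bq (j : ℕ) : Wd := if j = 0 then 1 else FreeMonoid.of j

/-- The generic series `∑ b_j T^j`. -/
def lamQ : PowerSeries (MonoidAlgebra ℚ Wd) :=
  PowerSeries.mk fun j => MonoidAlgebra.single (bq j) 1

/-- The inverse series. -/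
def sigQ : PowerSeries (MonoidAlgebra ℚ Wd) := PowerSeries.invOfUnit lamQ 1

lemma lamQ_const : PowerSeries.constantCoeff lamQ = ((1 : (MonoidAlgebra ℚ Wd)ˣ) : MonoidAlgebra ℚ Wd) := by
  rw [← PowerSeries.coeff_zero_eq_constantCoeff_apply, lamQ, PowerSeries.coeff_mk]
  simp [bq, MonoidAlgebra.one_def]

lemma lam_sig : lamQ * sigQ = 1 := PowerSeries.mul_invOfUnit _ _ lamQ_const
lemma sig_lam : sigQ * lamQ = 1 := PowerSeries.invOfUnit_mul _ _ lamQ_const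

lemma sigQ_const : PowerSeries.constantCoeff sigQ = 1 := by
  rw [sigQ, PowerSeries.constantCoeff_invOfUnit]; simp

/-- The alternating series. -/
def EQ (k : ℕ) : PowerSeries (MonoidAlgebra ℚ Wd) := if k % 2 = 0 then sigQ else lamQ

lemma EQ_mul (k : ℕ) : EQ k * EQ (k + 1) = 1 := by
  unfold EQ
  rcases Nat.mod_two_eq_zero_or_one k with h | h
  · rw [if_pos h, if_neg (by omega), sig_lam]
  · rw [if_neg (by omega), if_pos (by omega), lam_sig]

lemma EQ_const (k : ℕ) : PowerSeries.constantCoeff (EQ k) = 1 := by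
  unfold EQ
  split_ifs
  · exact sigQ_const
  · simpa using lamQ_const

lemma EQ_add_two (k : ℕ) : EQ (k + 2) = EQ k := by simp [EQ]

section Scale

variable {R : Type*} [CommRing R] [Algebra ℚ R]

/-- Base change and rescaling. -/
def sc (t : R) (s : PowerSeries (MonoidAlgebra ℚ Wd)) : PowerSeries (MonoidAlgebra R Wd) :=
  PowerSeries.mk fun j =>
    t ^ j • MonoidAlgebra.mapRingHom Wd (algebraMap ℚ R) (PowerSeries.coeff j s)

lemma sc_mul (t : R) (s s' : PowerSeries (MonoidAlgebra ℚ Wd)) :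
    sc t s * sc t s' = sc t (s * s') := by
  ext1 j
  simp only [sc, PowerSeries.coeff_mul, PowerSeries.coeff_mk, map_sum, map_mul, Finset.smul_sum]
  apply Finset.sum_congr rfl
  rintro ⟨x, y⟩ hxy
  rw [Finset.HasAntidiagonal.mem_antidiagonal] at hxy
  simp only at hxy
  rw [← hxy, pow_add, smul_mul_assoc, mul_smul_comm, smul_smul]

lemma sc_one (t : R) : sc t 1 = 1 := by
  ext1 j
  simp only [sc, PowerSeries.coeff_mk, PowerSeries.coeff_one]
  split_ifs with h
  · simp [h]
  · simp

lemma sc_zero (s : PowerSeries (MonoidAlgebra ℚ Wd)) (hs : PowerSeries.constantCoeff s = 1) :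
    sc (0 : R) s = 1 := by
  ext1 j
  simp only [sc, PowerSeries.coeff_mk, PowerSeries.coeff_one]
  split_ifs with h
  · subst h
    simp [hs]
  · simp [h]

lemma sc_map {S : Type*} [CommRing S] [Algebra ℚ S] (φ : R →ₐ[ℚ] S) (t : R)
    (s : PowerSeries (MonoidAlgebra ℚ Wd)) :
    PowerSeries.map (MonoidAlgebra.mapRingHom Wd (φ : R →+* S)) (sc t s) = sc (φ t) s := by
  ext j w
  simp [sc]

/-- Ordered products. -/
def Wp (u : ℕ → R) : ℕ → PowerSeries (MonoidAlgebra R Wd)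
  | 0 => 1
  | N + 1 => Wp u N * sc (u N) (EQ N)

lemma Wp_congr (u v : ℕ → R) (N : ℕ) (h : ∀ k < N, u k = v k) : Wp u N = Wp v N := by
  induction N with
  | zero => rfl
  | succ N ih => rw [Wp, Wp, ih (fun k hk => h k (by omega)), h N (by omega)]

lemma Wp_map {S : Type*} [CommRing S] [Algebra ℚ S] (φ : R →ₐ[ℚ] S) (u : ℕ → R) (N : ℕ) :
    PowerSeries.map (MonoidAlgebra.mapRingHom Wd (φ : R →+* S)) (Wp u N) =
      Wp (fun k => φ (u k)) N := by
  induction N with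
  | zero => simp [Wp]
  | succ N ih => rw [Wp, Wp, map_mul, ih, sc_map]

lemma Wp_cancel (u v : ℕ → R) (i N : ℕ) (hN : i ≤ N) (hi : u (i + 1) = u i)
    (h1 : ∀ k < i, v k = u k) (h2 : ∀ k, i ≤ k → v k = u (k + 2)) :
    Wp u (N + 2) = Wp v N := by
  induction N, hN using Nat.le_induction with
  | base =>
    rw [Wp, Wp, hi, mul_assoc, sc_mul, EQ_mul, sc_one, mul_one]
    exact Wp_congr _ _ _ (fun k hk => (h1 k hk).symm)
  | succ N hN ih =>
    rw [Wp, ih, EQ_add_two, ← h2 N hN, ← Wp]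

/-- The linear functional attached to a function on words. -/
def Fn (G : Wd → ℚ) : MonoidAlgebra R Wd →+ R :=
  (Finsupp.liftAddHom (fun w => AddMonoidHom.mulRight (algebraMap ℚ R (G w)))).comp
    (MonoidAlgebra.coeffAddEquiv (R := R) (M := Wd)).toAddMonoidHom

lemma Fn_apply (G : Wd → ℚ) (a : MonoidAlgebra R Wd) :
    Fn G a = ∑ w ∈ a.coeff.support, a.coeff w * algebraMap ℚ R (G w) := by
  simp [Fn, Finsupp.sum]

lemma Fn_single (G : Wd → ℚ) (w : Wd) (r : R) :
    Fn G (MonoidAlgebra.single w r) = r * algebraMap ℚ R (G w) := by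
  simp [Fn]

lemma Fn_map {S : Type*} [CommRing S] [Algebra ℚ S] (φ : R →ₐ[ℚ] S) (G : Wd → ℚ)
    (a : MonoidAlgebra R Wd) :
    φ (Fn G a) = Fn G (MonoidAlgebra.mapRingHom Wd (φ : R →+* S) a) := by
  have : (φ : R →+ S).comp (Fn G) = (Fn G).comp
      (MonoidAlgebra.mapRingHom Wd (φ : R →+* S)).toAddMonoidHom := by
    apply MonoidAlgebra.addMonoidHom_ext
    intro w r
    simp [Fn_single]
  exact DFunLike.congr_fun this a

end Scale

/-- The preimage family. -/
def fam (G : Wd → ℚ) (n m : ℕ) : MvPolynomial ℕ ℚ :=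
  Fn G (PowerSeries.coeff n (Wp (fun k => (X k : MvPolynomial ℕ ℚ)) (2 * m + 1)))

lemma fam_aeval {R : Type*} [CommRing R] [Algebra ℚ R] (G : Wd → ℚ) (n m : ℕ) (u : ℕ → R) :
    aeval u (fam G n m) = Fn G (PowerSeries.coeff n (Wp u (2 * m + 1))) := by
  rw [fam, Fn_map, ← PowerSeries.coeff_map, Wp_map]
  simp

lemma fam_stable (G : Wd → ℚ) (n : ℕ) : IsStableX (fam G n) := by
  constructor
  · intro m
    have h : aeval (fun k => if k < 2 * m + 1 then (X k : MvPolynomial ℕ ℚ) else 0) (fam G n m) =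
        fam G n m := by
      rw [fam_aeval, fam]
      refine congrArg (fun s => Fn G (PowerSeries.coeff n s)) ?_
      apply Wp_congr
      intro k hk
      simp [hk]
    intro j hj
    rw [← h] at hj
    obtain ⟨i, hi, hji⟩ := mem_vars_bind₁ _ _ hj
    split_ifs at hji with h
    · rw [vars_X, Finset.mem_singleton] at hji
      rw [Finset.mem_range]
      omega
    · simp at hji
  · intro m
    rw [fam_aeval, fam]
    refine congrArg (fun s => Fn G (PowerSeries.coeff n s)) ?_
    rw [show 2 * (m + 1) + 1 = 2 * m + 1 + 1 + 1 by ring, Wp, Wp, if_neg (by omega),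
      if_neg (by omega), sc_zero _ (EQ_const _), sc_zero _ (EQ_const _), mul_one, mul_one]
    apply Wp_congr
    intro k hk
    simp [hk]

lemma fam_Ex (G : Wd → ℚ) (n : ℕ) : SatisfiesEx (fam G n) := by
  intro m i hi
  rw [fam_aeval, fam_aeval]
  refine congrArg (fun s => Fn G (PowerSeries.coeff n s)) ?_
  apply Wp_cancel _ _ i (2 * m + 1) (by omega)
  · simp
  · intro k hk
    simp [hk, show k ≠ i + 1 by omega]
  · intro k hk
    simp [show ¬ (k < i) by omega, show k + 2 ≠ i + 1 by omega]

/-- Series whose `n`-th coefficient has homogeneous coefficients of degree `n`. -/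
def Good (s : PowerSeries (MonoidAlgebra (MvPolynomial ℕ ℚ) Wd)) : Prop :=
  ∀ n w, ((PowerSeries.coeff n s).coeff w).IsHomogeneous n

lemma Good.mul {s s' : PowerSeries (MonoidAlgebra (MvPolynomial ℕ ℚ) Wd)} (h : Good s)
    (h' : Good s') : Good (s * s') := by
  intro n w
  rw [PowerSeries.coeff_mul, MonoidAlgebra.coeff_sum, Finsupp.finsetSum_apply]
  apply IsHomogeneous.sum
  rintro ⟨x, y⟩ hxy
  rw [Finset.HasAntidiagonal.mem_antidiagonal] at hxy
  rw [MonoidAlgebra.coeff_mul]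
  simp only [Finsupp.sum]
  apply IsHomogeneous.sum
  intro a _
  apply IsHomogeneous.sum
  intro b _
  split_ifs
  · rw [← hxy]
    exact (h x a).mul (h' y b)
  · exact isHomogeneous_zero _ _ _

lemma good_one : Good 1 := by
  intro n w
  rw [PowerSeries.coeff_one]
  split_ifs with h
  · subst h
    rw [MonoidAlgebra.one_def, MonoidAlgebra.coeff_single, Finsupp.single_apply]
    split_ifs
    · exact isHomogeneous_one _ _
    · exact isHomogeneous_zero _ _ _
  · exact isHomogeneous_zero _ _ _

lemma good_sc (k : ℕ) (s : PowerSeries (MonoidAlgebra ℚ Wd)) :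
    Good (sc (X k : MvPolynomial ℕ ℚ) s) := by
  intro n w
  simp only [sc, PowerSeries.coeff_mk, MonoidAlgebra.coeff_smul, Finsupp.smul_apply,
    MonoidAlgebra.coeff_mapRingHom, smul_eq_mul]
  have := (isHomogeneous_X_pow (R := ℚ) k n).mul
    (isHomogeneous_C ℕ ((PowerSeries.coeff n s).coeff w))
  simpa using this

lemma good_Wp (N : ℕ) : Good (Wp (fun k => (X k : MvPolynomial ℕ ℚ)) N) := by
  induction N with
  | zero => exact good_one
  | succ N ih => exact ih.mul (good_sc _ _)

lemma fam_hom (G : Wd → ℚ) (n m : ℕ) : (fam G n m).IsHomogeneous n := by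
  rw [fam, Fn_apply]
  apply IsHomogeneous.sum
  intro w _
  have := (good_Wp (2 * m + 1) n w).mul (isHomogeneous_C ℕ (G w))
  simpa using this
/-- The word of the nonzero exponents. -/
def wd (m : ℕ) (d : ℕ →₀ ℕ) : Wd :=
  FreeMonoid.ofList (((List.range m).filter (fun k => decide (d k ≠ 0))).map d)

lemma wd_succ (m : ℕ) (d : ℕ →₀ ℕ) : wd (m + 1) d = wd m d * bq (d m) := by
  unfold wd bq
  rw [List.range_succ, List.filter_append, List.map_append, FreeMonoid.ofList_append]
  congr 1
  by_cases h : d m = 0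
  · simp [h]
  · simp [h]

lemma wd_congr (m : ℕ) (d e : ℕ →₀ ℕ) (h : ∀ k < m, d k = e k) : wd m d = wd m e := by
  induction m with
  | zero => rfl
  | succ m ih => rw [wd_succ, wd_succ, ih (fun k hk => h k (by omega)), h m (by omega)]

/-- Product of the series at `y_1, …, y_m`. -/
def Vp : ℕ → PowerSeries (MonoidAlgebra (MvPolynomial ℕ ℚ) Wd)
  | 0 => 1
  | m + 1 => Vp m * sc (X m) lamQ

lemma Wp_oddZero (m : ℕ) : Wp oddZero (2 * m + 1) = Vp m := by
  induction m with
  | zero =>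
    simp only [Wp, Vp, oddZero, one_mul]
    exact sc_zero _ (EQ_const _)
  | succ m ih =>
    rw [show 2 * (m + 1) + 1 = 2 * m + 1 + 1 + 1 by ring, Wp, Wp, ih, Vp]
    have h1 : oddZero (2 * m + 1) = X m := by
      unfold oddZero
      rw [if_neg (by omega)]
      congr 1
      omega
    have h2 : oddZero (2 * m + 1 + 1) = 0 := by
      unfold oddZero
      rw [if_pos (by omega)]
    have h3 : EQ (2 * m + 1) = lamQ := by
      unfold EQ
      rw [if_neg (by omega)]
    rw [h1, h2, h3, sc_zero _ (EQ_const _), mul_one]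

lemma Vp_coeff (m n : ℕ) : PowerSeries.coeff n (Vp m) =
    ∑ c ∈ Finset.finsuppAntidiag (Finset.range m) n,
      MonoidAlgebra.single (wd m c) (monomial c (1 : ℚ)) := by
  induction m generalizing n with
  | zero =>
    rw [Vp, PowerSeries.coeff_one, Finset.range_zero]
    split_ifs with h
    · subst h
      rw [Finset.finsuppAntidiag_empty_zero, Finset.sum_singleton]
      rfl
    · rw [Finset.finsuppAntidiag_empty_of_ne_zero h, Finset.sum_empty]
  | succ m ih =>
    rw [Vp, PowerSeries.coeff_mul]
    have h1 : ∀ p : ℕ × ℕ, PowerSeries.coeff p.1 (Vp m) *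
        PowerSeries.coeff p.2 (sc (X m : MvPolynomial ℕ ℚ) lamQ) =
        ∑ c ∈ Finset.finsuppAntidiag (Finset.range m) p.1,
          MonoidAlgebra.single (wd m c * bq p.2) (monomial (c + Finsupp.single m p.2) (1 : ℚ)) := by
      intro p
      rw [ih, Finset.sum_mul]
      apply Finset.sum_congr rfl
      intro c _
      simp only [sc, lamQ, PowerSeries.coeff_mk, MonoidAlgebra.coe_mapRingHom,
        MonoidAlgebra.map_single, MonoidAlgebra.smul_single, MonoidAlgebra.single_mul_single,
        smul_eq_mul]
      rw [X_pow_eq_monomial, AddMonoidHom.coe_coe, map_one (algebraMap ℚ (MvPolynomial ℕ ℚ)), mul_one,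
        monomial_mul, mul_one]
    rw [Finset.sum_congr rfl (fun p _ => h1 p), Finset.sum_sigma']
    symm
    refine Finset.sum_bij' (fun c _ => ⟨(n - c m, c m), c.erase m⟩)
      (fun p _ => p.2 + Finsupp.single m p.1.2) ?_ ?_ ?_ ?_ ?_
    · intro c hc
      rw [Finset.mem_finsuppAntidiag] at hc
      obtain ⟨hs, hsup⟩ := hc
      rw [Finset.sum_range_succ] at hs
      rw [Finset.mem_sigma, Finset.mem_finsuppAntidiag, Finset.HasAntidiagonal.mem_antidiagonal]
      refine ⟨by simp only; omega, ?_, ?_⟩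
      · rw [Finset.sum_congr rfl (g := fun k => c k)]
        · simp only; omega
        · intro k hk
          rw [Finset.mem_range] at hk
          exact Finsupp.erase_ne (by omega)
      · intro k hk
        rw [Finsupp.support_erase, Finset.mem_erase] at hk
        have := Finset.mem_range.1 (hsup hk.2)
        rw [Finset.mem_range]
        omega
    · rintro ⟨⟨x, y⟩, c⟩ hp
      rw [Finset.mem_sigma, Finset.mem_finsuppAntidiag,
        Finset.HasAntidiagonal.mem_antidiagonal] at hp
      obtain ⟨hxy, hs, hsup⟩ := hp
      simp only at hxy hs hsup
      have hcm : c m = 0 := by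
        by_contra hcon
        have := Finset.mem_range.1 (hsup (Finsupp.mem_support_iff.2 hcon))
        omega
      rw [Finset.mem_finsuppAntidiag]
      constructor
      · rw [Finset.sum_range_succ, Finset.sum_congr rfl (g := fun k => c k)]
        · simp [hcm]; omega
        · intro k hk
          rw [Finset.mem_range] at hk
          simp [show k ≠ m by omega]
      · intro k hk
        rw [Finset.mem_range]
        by_contra hcon
        rw [Finsupp.mem_support_iff, Finsupp.add_apply, Finsupp.single_apply,
          if_neg (by omega), add_zero] at hk
        have := Finset.mem_range.1 (hsup (Finsupp.mem_support_iff.2 hk))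
        omega
    · intro c hc
      exact Finsupp.erase_add_single m c
    · rintro ⟨⟨x, y⟩, c⟩ hp
      rw [Finset.mem_sigma, Finset.mem_finsuppAntidiag,
        Finset.HasAntidiagonal.mem_antidiagonal] at hp
      obtain ⟨hxy, hs, hsup⟩ := hp
      simp only at hxy hs hsup
      have hcm : c m = 0 := by
        by_contra hcon
        have := Finset.mem_range.1 (hsup (Finsupp.mem_support_iff.2 hcon))
        omega
      have e2 : (c + Finsupp.single m y).erase m = c := by
        ext k
        by_cases hk : k = m
        · subst hk; simp [hcm]
        · simp [Finsupp.erase_ne hk]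
      have e1 : (c + Finsupp.single m y) m = y := by simp [hcm]
      simp only [e1, e2]
      rw [show n - y = x by omega]
    · intro c hc
      simp only
      rw [Finsupp.erase_add_single, wd_succ, wd_congr m c (c.erase m)]
      intro k hk
      exact (Finsupp.erase_ne (by omega)).symm

lemma fam_phi (G : Wd → ℚ) (n m : ℕ) : aeval oddZero (fam G n m) =
    ∑ c ∈ Finset.finsuppAntidiag (Finset.range m) n, monomial c (G (wd m c)) := by
  rw [fam_aeval, Wp_oddZero, Vp_coeff, map_sum]
  apply Finset.sum_congr rfl
  intro c _
  rw [Fn_single, algebraMap_eq, mul_comm, C_mul_monomial, mul_one]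

/-- The function on words attached to a quasi-symmetric family. -/
def Gof (g : ℕ → MvPolynomial ℕ ℚ) (w : Wd) : ℚ :=
  coeff (∑ j : Fin w.toList.length, Finsupp.single (j : ℕ) (w.toList.get j)) (g w.toList.length)

lemma qsym_stab {g : ℕ → MvPolynomial ℕ ℚ} (hg : IsQSymStable g) {r m : ℕ} (h : r ≤ m)
    (c : Fin r → ℕ) : coeff (∑ j : Fin r, Finsupp.single (j : ℕ) (c j)) (g m) =
      coeff (∑ j : Fin r, Finsupp.single (j : ℕ) (c j)) (g r) := by
  have hv : Function.Injective (fun j : Fin r => (j : ℕ)) := Fin.val_injective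
  rw [← mapDomain_eq_sum (fun j : Fin r => (j : ℕ)) c, ← coeff_killCompl hv, ← coeff_killCompl hv]
  congr 1
  induction m, h using Nat.le_induction with
  | base => rfl
  | succ m hm ih =>
    rw [← ih, ← hg.2.1 m, killCompl, ← AlgHom.comp_apply, comp_aeval]
    congr 2
    funext k
    by_cases hk : k = m
    · rw [if_pos hk, map_zero, dif_neg]
      rintro ⟨j, hj⟩
      have := j.2
      simp only at hj
      omega
    · rw [if_neg hk, aeval_X]

lemma Gof_ofFn (g : ℕ → MvPolynomial ℕ ℚ) {r : ℕ} (c : Fin r → ℕ) :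
    Gof g (FreeMonoid.ofList (List.ofFn c)) =
      coeff (∑ j : Fin r, Finsupp.single (j : ℕ) (c j)) (g r) := by
  have hG : ∀ l : List ℕ, l = List.ofFn c → Gof g (FreeMonoid.ofList l) =
      coeff (∑ j : Fin r, Finsupp.single (j : ℕ) (c j)) (g r) := by
    intro l hl
    have hlen : l.length = r := by rw [hl, List.length_ofFn]
    unfold Gof
    simp only [FreeMonoid.toList_ofList]
    subst hlen
    have : c = l.get := List.ofFn_injective (by rw [← hl, List.ofFn_get])
    rw [this]
    rfl
  exact hG _ rfl

lemma Gof_wd {g : ℕ → MvPolynomial ℕ ℚ} (hg : IsQSymStable g) (m : ℕ) (d : ℕ →₀ ℕ)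
    (hd : d.support ⊆ Finset.range m) : Gof g (wd m d) = coeff d (g m) := by
  set r := d.support.card with hr
  let a : Fin r → ℕ := d.support.orderEmbOfFin rfl
  have ha : StrictMono a := (d.support.orderEmbOfFin rfl).strictMono
  have hmem : ∀ j, a j ∈ d.support := fun j => Finset.orderEmbOfFin_mem _ _ j
  have hm : ∀ j, a j < m := fun j => Finset.mem_range.1 (hd (hmem j))
  have hrange : ∀ k, d k ≠ 0 ↔ k ∈ Set.range a := by
    intro k
    rw [Finset.range_orderEmbOfFin, Finset.mem_coe, Finsupp.mem_support_iff]
  have hrm : r ≤ m := by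
    simpa using Finset.card_le_card hd
  have hw : wd m d = FreeMonoid.ofList (List.ofFn (d ∘ a)) := by
    unfold wd
    have := filter_range_eq a ha hm (fun k => d k ≠ 0) hrange
    rw [show (List.range m).filter (fun k => decide (d k ≠ 0)) = List.ofFn a by
      convert this, List.map_ofFn]
  have hsum : d = ∑ j, Finsupp.single (a j) (d (a j)) := by
    conv_lhs => rw [← Finsupp.sum_single d, Finsupp.sum]
    have : d.support = Finset.univ.map ⟨a, ha.injective⟩ := by
      ext k
      rw [Finsupp.mem_support_iff, hrange]
      simp
    rw [this, Finset.sum_map]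
    rfl
  rw [hw, Gof_ofFn g, ← qsym_stab hg hrm, ← hg.2.2 m r a (d ∘ a) ha hm
    (fun j => Nat.pos_of_ne_zero (Finsupp.mem_support_iff.1 (hmem j)))]
  conv_rhs => rw [hsum]
  rfl

lemma fam_phi_eq {g : ℕ → MvPolynomial ℕ ℚ} (hg : IsQSymStable g) {n : ℕ}
    (hn : ∀ m, (g m).IsHomogeneous n) (m : ℕ) : aeval oddZero (fam (Gof g) n m) = g m := by
  rw [fam_phi]
  ext d
  rw [coeff_sum]
  simp only [coeff_monomial]
  rw [Finset.sum_ite_eq']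
  split_ifs with h
  · rw [Finset.mem_finsuppAntidiag] at h
    exact Gof_wd hg m d h.2
  · by_contra hcon
    apply h
    have hcon' : coeff d (g m) ≠ 0 := fun h => hcon h.symm
    have hsup : d.support ⊆ Finset.range m := by
      intro k hk
      apply hg.1 m
      rw [mem_vars_iff_mem_support]
      exact ⟨d, mem_support_iff.2 hcon', hk⟩
    rw [Finset.mem_finsuppAntidiag]
    refine ⟨?_, hsup⟩
    have := hn m hcon'
    rw [Finsupp.weight_apply, Finsupp.sum] at this
    rw [← this]
    symm
    simp only [Pi.one_apply, smul_eq_mul, mul_one]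
    apply Finset.sum_subset hsup
    intro k _ hk
    exact Finsupp.notMem_support_iff.1 hk

/-- Fix `n ≥ 0`.  The map `Φ` sending a stable x-family `f` satisfying
(E_x) whose members are homogeneous of degree `n` to `g`, `g_m = f_{2m+1}(0,y₁,0,…,0,y_m,0)`
(all odd-indexed variables set to `0`), is `ℚ`-linear and a bijection from the space of
such stable x-families onto the space of quasi-symmetric stable families that are
homogeneous of degree `n`. -/
theorem stmt9 (n : ℕ) :
    (∀ (c : ℚ) (f f' : ℕ → MvPolynomial ℕ ℚ),
      (fun m => aeval oddZero ((c • f + f') m)) =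
        c • (fun m => aeval oddZero (f m)) + fun m => aeval oddZero (f' m)) ∧
    Set.BijOn (fun (f : ℕ → MvPolynomial ℕ ℚ) (m : ℕ) => aeval oddZero (f m))
      {f | IsStableX f ∧ SatisfiesEx f ∧ ∀ m, (f m).IsHomogeneous n}
      {g | IsQSymStable g ∧ ∀ m, (g m).IsHomogeneous n} := by
  refine ⟨?_, ?_, ?_, ?_⟩
  · intro c f f'
    funext m
    simp [map_add, map_smul]
  · rintro f ⟨hf, hE, hn⟩
    exact ⟨phi_qsym hf hE, fun m => phi_hom (hn m)⟩
  · rintro f ⟨hf, hE, hn⟩ f' ⟨hf', hE', hn'⟩ heq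
    have h0 : ∀ m, aeval oddZero ((f - f') m) = 0 := by
      intro m
      have := congrFun heq m
      simp only at this
      rw [Pi.sub_apply, map_sub, this, sub_self]
    have hs : IsStableX (f - f') := by
      constructor
      · intro m k hk
        rw [Pi.sub_apply] at hk
        have := vars_sub_subset _ hk
        rw [Finset.mem_union] at this
        rcases this with h | h
        · exact hf.1 m h
        · exact hf'.1 m h
      · intro m
        rw [Pi.sub_apply, Pi.sub_apply, map_sub, hf.2 m, hf'.2 m]
    have hE2 : SatisfiesEx (f - f') := by
      intro m i hi
      rw [Pi.sub_apply, Pi.sub_apply, map_sub, map_sub, hE m i hi, hE' m i hi]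
    have := f_zero hs hE2 (fun m => (hn m).sub (hn' m)) h0
    funext m
    exact sub_eq_zero.1 (this m)
  · rintro g ⟨hg, hn⟩
    have h1 := fam_stable (Gof g) n
    have h2 := fam_Ex (Gof g) n
    have h3 := fam_hom (Gof g) n
    have h4 := fam_phi_eq hg hn
    generalize fam (Gof g) n = f at h1 h2 h3 h4
    exact ⟨f, ⟨h1, h2, h3⟩, funext h4⟩
end
end

section
/- Let P and P′ be finite ranked posets such that F_P^(N) = F_{P′}^(N) in ℚ[x₁,…,x_N] for every N ≥ 1. Then N_P^(m) = N_{P′}^(m) in ℚ[p₁,…,p_{m+1},q₁,…,q_m] for every m ≥ 0. (In other words, the generating series of P-partitions in one alphabet determines the generating series in two alphabets.) -/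
open MvPolynomial
open scoped Classical

noncomputable section

/-- Order ideals of a finite poset. -/
abbrev Idl (α : Type) [PartialOrder α] := {I : Finset α // IsLowerSet (I : Set α)}

/-- Elementary transfer matrix: add a set of elements of colour `D`, with weight `w` each. -/
def EM {α : Type} [Fintype α] [PartialOrder α] (D : α → Prop) (w : ℚ) :
    Matrix (Idl α) (Idl α) ℚ :=
  fun I J => if I.1 ⊆ J.1 ∧ ∀ x ∈ J.1 \ I.1, D x then w ^ (J.1 \ I.1).card else 0

/-- Between two comparable elements of colour `D` there is one of the other colour. -/
def Alt {α : Type} [PartialOrder α] (D : α → Prop) : Prop :=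
  ∀ x y : α, x < y → D x → D y → ∃ z, x < z ∧ z < y ∧ ¬ D z

/-- Transfer matrix of one label. -/
def DM {α : Type} [Fintype α] [PartialOrder α] (ht : α → ℕ) (p q : ℚ) :
    Matrix (Idl α) (Idl α) ℚ :=
  fun I J => if I.1 ⊆ J.1 ∧ ∀ x ∈ J.1 \ I.1, ∀ y ∈ J.1 \ I.1, x < y → ¬ Odd (ht x) then
    ∏ v ∈ J.1 \ I.1, (if Even (ht v) then p else q) else 0

section transfer
variable {α : Type} [Fintype α] [PartialOrder α]

lemma EM_cond {D : α → Prop} {w : ℚ} {I J : Idl α} (h : EM D w I J ≠ 0) :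
    I.1 ⊆ J.1 ∧ ∀ x ∈ J.1 \ I.1, D x := by
  by_contra hc
  exact h (if_neg hc)

lemma EM_zero (D : α → Prop) : EM D 0 = 1 := by
  ext I J
  unfold EM
  rw [Matrix.one_apply]
  by_cases h : I = J
  · subst h; simp
  · rw [if_neg h]
    split_ifs with h1
    · apply zero_pow
      intro h2
      apply h
      rw [Finset.card_eq_zero, Finset.sdiff_eq_empty_iff_subset] at h2
      exact Subtype.ext (h1.1.antisymm h2)
    · rfl

lemma EM_mul (D : α → Prop) (hD : Alt D) (a b : ℚ) : EM D a * EM D b = EM D (a + b) := by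
  ext I K
  rw [Matrix.mul_apply]
  by_cases h : I.1 ⊆ K.1 ∧ ∀ x ∈ K.1 \ I.1, D x
  · have hR : EM D (a + b) I K = (a + b) ^ (K.1 \ I.1).card := if_pos h
    rw [hR, ← Finset.sum_pow_mul_eq_add_pow]
    have hlow : ∀ T ∈ (K.1 \ I.1).powerset, IsLowerSet ((I.1 ∪ T : Finset α) : Set α) := by
      intro T hT y x hxy hy
      rw [Finset.mem_powerset] at hT
      simp only [Finset.coe_union, Set.mem_union, Finset.mem_coe] at hy ⊢
      rcases hy with hy | hy
      · exact Or.inl (I.2 hxy hy)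
      · by_contra hx
        push Not at hx
        have hyK := hT hy
        rw [Finset.mem_sdiff] at hyK
        have hne : x < y := lt_of_le_of_ne hxy (fun e => hx.2 (e ▸ hy))
        have hxK : x ∈ K.1 := K.2 hxy hyK.1
        obtain ⟨z, h1, h2, h3⟩ := hD x y hne (h.2 x (Finset.mem_sdiff.2 ⟨hxK, hx.1⟩)) (h.2 y (hT hy))
        apply h3
        apply h.2 z
        rw [Finset.mem_sdiff]
        exact ⟨K.2 h2.le hyK.1, fun hz => hx.1 (I.2 h1.le hz)⟩
    symm
    apply Finset.sum_bij_ne_zero (fun T hT _ => (⟨I.1 ∪ T, hlow T hT⟩ : Idl α))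
    · intros; exact Finset.mem_univ _
    · intro T1 h1 _ T2 h2 _ he
      have he' : I.1 ∪ T1 = I.1 ∪ T2 := congrArg Subtype.val he
      rw [Finset.mem_powerset] at h1 h2
      ext x
      have := Finset.ext_iff.1 he' x
      have a1 := @h1 x
      have a2 := @h2 x
      simp only [Finset.mem_union, Finset.mem_sdiff] at *
      tauto
    · intro J _ hJ
      have hA : EM D a I J ≠ 0 := left_ne_zero_of_mul hJ
      have hB : EM D b J K ≠ 0 := right_ne_zero_of_mul hJ
      unfold EM at hA hB
      have hA' := (ite_ne_right_iff.1 hA).1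
      have hB' := (ite_ne_right_iff.1 hB).1
      refine ⟨J.1 \ I.1, ?_, ?_, ?_⟩
      · rw [Finset.mem_powerset]
        exact Finset.sdiff_subset_sdiff hB'.1 le_rfl
      · have e : (K.1 \ I.1).card - (J.1 \ I.1).card = (K.1 \ J.1).card := by
          rw [Finset.card_sdiff_of_subset h.1, Finset.card_sdiff_of_subset hA'.1,
            Finset.card_sdiff_of_subset hB'.1]
          have := Finset.card_le_card hA'.1
          have := Finset.card_le_card hB'.1
          omega
        rw [e]
        rw [if_pos hA'] at hA
        rw [if_pos hB'] at hB
        exact mul_ne_zero hA hB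
      · apply Subtype.ext
        simp [Finset.union_sdiff_of_subset hA'.1]
    · intro T hT _
      have hT' := Finset.mem_powerset.1 hT
      have e1 : (I.1 ∪ T) \ I.1 = T := by
        ext x
        have := @hT' x
        simp only [Finset.mem_union, Finset.mem_sdiff] at *
        tauto
      have e2 : K.1 \ (I.1 ∪ T) = (K.1 \ I.1) \ T := by
        ext x
        simp only [Finset.mem_union, Finset.mem_sdiff] at *
        tauto
      unfold EM
      rw [if_pos, if_pos]
      · simp only [e1, e2]
        rw [Finset.card_sdiff_of_subset hT']
      · refine ⟨Finset.union_subset h.1 (hT'.trans Finset.sdiff_subset), ?_⟩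
        intro x hx
        simp only [e2] at hx
        exact h.2 x (Finset.mem_sdiff.1 hx).1
      · refine ⟨Finset.subset_union_left, ?_⟩
        intro x hx
        simp only [e1] at hx
        exact h.2 x (hT' hx)
  · have hR : EM D (a + b) I K = 0 := if_neg h
    rw [hR]
    apply Finset.sum_eq_zero
    intro J _
    by_contra hJ
    have hA : EM D a I J ≠ 0 := left_ne_zero_of_mul hJ
    have hB : EM D b J K ≠ 0 := right_ne_zero_of_mul hJ
    unfold EM at hA hB
    have hA' := (ite_ne_right_iff.1 hA).1
    have hB' := (ite_ne_right_iff.1 hB).1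
    apply h
    refine ⟨hA'.1.trans hB'.1, ?_⟩
    intro x hx
    by_cases hxJ : x ∈ J.1
    · exact hA'.2 x (Finset.mem_sdiff.2 ⟨hxJ, (Finset.mem_sdiff.1 hx).2⟩)
    · exact hB'.2 x (Finset.mem_sdiff.2 ⟨(Finset.mem_sdiff.1 hx).1, hxJ⟩)

lemma ht_lt {ht : α → ℕ} (h : IsRanked ht) : ∀ x y : α, x < y →
    ∃ z, x < z ∧ z ≤ y ∧ ht z = ht x + 1 := by
  intro x y hxy
  obtain ⟨z, hz, hzy⟩ := exists_covBy_le_of_lt hxy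
  exact ⟨z, hz.lt, hzy, h.2 x z hz⟩

lemma alt_even {ht : α → ℕ} (h : IsRanked ht) : Alt (fun v => Even (ht v)) := by
  intro x y hxy hx hy
  obtain ⟨z, h1, h2, h3⟩ := ht_lt h x y hxy
  have hz : ¬ Even (ht z) := by rw [h3, Nat.even_add_one]; simpa using hx
  exact ⟨z, h1, lt_of_le_of_ne h2 (fun e => hz (e ▸ hy)), hz⟩

lemma alt_odd {ht : α → ℕ} (h : IsRanked ht) : Alt (fun v => Odd (ht v)) := by
  intro x y hxy hx hy
  obtain ⟨z, h1, h2, h3⟩ := ht_lt h x y hxy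
  have hz : ¬ Odd (ht z) := by
    rw [h3, Nat.not_odd_iff_even]; exact hx.add_one
  exact ⟨z, h1, lt_of_le_of_ne h2 (fun e => hz (e ▸ hy)), hz⟩

/-- The ideal in the middle of a decomposition. -/
lemma EM_mul_EM {ht : α → ℕ} (h : IsRanked ht) (p q : ℚ) :
    EM (fun v => Even (ht v)) p * EM (fun v => Odd (ht v)) q = DM ht p q := by
  ext I J
  rw [Matrix.mul_apply]
  have key : ∀ K : Idl α, EM (fun v => Even (ht v)) p I K * EM (fun v => Odd (ht v)) q K J ≠ 0 →
      I.1 ⊆ J.1 ∧ K.1 = I.1 ∪ (J.1 \ I.1).filter (fun v => Even (ht v)) := by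
    intro K hK
    have hA := left_ne_zero_of_mul hK
    have hB := right_ne_zero_of_mul hK
    have hA' := EM_cond hA
    have hB' := EM_cond hB
    refine ⟨hA'.1.trans hB'.1, ?_⟩
    ext x
    have a1 := @hA'.1 x
    have a2 := @hB'.1 x
    have a3 := hA'.2 x
    have a4 := hB'.2 x
    simp only [Finset.mem_union, Finset.mem_sdiff, Finset.mem_filter, ← Nat.not_even_iff_odd] at *
    tauto
  by_cases hc : I.1 ⊆ J.1 ∧ ∀ x ∈ J.1 \ I.1, ∀ y ∈ J.1 \ I.1, x < y → ¬ Odd (ht x)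
  · have hR : DM ht p q I J = ∏ v ∈ J.1 \ I.1, (if Even (ht v) then p else q) := if_pos hc
    rw [hR]
    have hlow : IsLowerSet ((I.1 ∪ (J.1 \ I.1).filter (fun v => Even (ht v)) : Finset α) : Set α) := by
      intro y x hxy hy
      rcases eq_or_lt_of_le hxy with rfl | hlt
      · exact hy
      rw [Finset.mem_coe, Finset.mem_union, Finset.mem_filter] at hy ⊢
      rcases hy with hy | ⟨hy, he⟩
      · exact Or.inl (I.2 hxy hy)
      · by_cases hxI : x ∈ I.1
        · exact Or.inl hxI
        · have hxJ : x ∈ J.1 \ I.1 := Finset.mem_sdiff.2 ⟨J.2 hxy (Finset.mem_sdiff.1 hy).1, hxI⟩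
          have := hc.2 x hxJ y hy hlt
          rw [Nat.not_odd_iff_even] at this
          exact Or.inr ⟨hxJ, this⟩
    rw [Finset.sum_eq_single (⟨_, hlow⟩ : Idl α)]
    · have e1 : (I.1 ∪ (J.1 \ I.1).filter (fun v => Even (ht v))) \ I.1 =
          (J.1 \ I.1).filter (fun v => Even (ht v)) := by
        ext x
        simp only [Finset.mem_union, Finset.mem_sdiff, Finset.mem_filter]
        tauto
      have e2 : J.1 \ (I.1 ∪ (J.1 \ I.1).filter (fun v => Even (ht v))) =
          (J.1 \ I.1).filter (fun v => ¬ Even (ht v)) := by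
        ext x
        simp only [Finset.mem_union, Finset.mem_sdiff, Finset.mem_filter]
        tauto
      rw [Finset.prod_ite, Finset.prod_const, Finset.prod_const]
      unfold EM
      rw [if_pos, if_pos]
      · simp only [e1, e2]
      · refine ⟨Finset.union_subset hc.1 ((Finset.filter_subset _ _).trans Finset.sdiff_subset), ?_⟩
        intro x hx
        simp only [e2, Finset.mem_filter] at hx
        exact Nat.not_even_iff_odd.1 hx.2
      · refine ⟨Finset.subset_union_left, ?_⟩
        intro x hx
        simp only [e1, Finset.mem_filter] at hx
        exact hx.2
    · intro K _ hK
      by_contra h0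
      exact hK (Subtype.ext (key K h0).2)
    · intro h0; exact absurd (Finset.mem_univ _) h0
  · have hR : DM ht p q I J = 0 := if_neg hc
    rw [hR]
    apply Finset.sum_eq_zero
    intro K _
    by_contra h0
    obtain ⟨hIJ, hK⟩ := key K h0
    have hA := left_ne_zero_of_mul h0
    have hA' := EM_cond hA
    apply hc
    refine ⟨hIJ, ?_⟩
    have aux : ∀ x ∈ J.1 \ I.1, ∀ y ∈ J.1 \ I.1, x < y → Even (ht y) → ¬ Odd (ht x) := by
      intro x hx y hy hxy hey
      have hyK : y ∈ K.1 := by rw [hK]; simp only [Finset.mem_union, Finset.mem_filter]; tauto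
      have hxK : x ∈ K.1 := K.2 hxy.le hyK
      rw [Nat.not_odd_iff_even]
      exact hA'.2 x (Finset.mem_sdiff.2 ⟨hxK, (Finset.mem_sdiff.1 hx).2⟩)
    intro x hx y hy hxy hox
    obtain ⟨z, h1, h2, h3⟩ := ht_lt h x y hxy
    refine aux x hx z ?_ h1 (by rw [h3]; exact hox.add_one) hox
    rw [Finset.mem_sdiff] at *
    exact ⟨J.2 h2 hy.1, fun hz => hx.2 (I.2 h1.le hz)⟩

/-- The empty ideal. -/
def botI (α : Type) [PartialOrder α] : Idl α := ⟨∅, by simpa using isLowerSet_empty⟩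
/-- The full ideal. -/
def topI (α : Type) [Fintype α] [PartialOrder α] : Idl α :=
  ⟨Finset.univ, by simpa using isLowerSet_univ⟩

lemma EM_bot {ht : α → ℕ} (h : IsRanked ht) (w : ℚ) (J : Idl α) :
    EM (fun v => Odd (ht v)) w (botI α) J = if J = botI α then 1 else 0 := by
  unfold EM
  by_cases hJ : J = botI α
  · subst hJ; simp
  · rw [if_neg hJ, if_neg]
    rintro ⟨-, h2⟩
    have hne : J.1.Nonempty := by
      rw [Finset.nonempty_iff_ne_empty]
      intro e; exact hJ (Subtype.ext e)
    obtain ⟨x, hx⟩ := J.1.exists_minimal hne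
    have hmin : IsMin x := by
      intro y hy
      exact hx.2 (J.2 hy hx.1) hy
    have : Odd (ht x) := h2 x (by simpa [botI] using hx.1)
    rw [h.1 x hmin] at this
    simp at this

lemma EM_bot_mul {ht : α → ℕ} (h : IsRanked ht) (w : ℚ) (M : Matrix (Idl α) (Idl α) ℚ) (J : Idl α) :
    (EM (fun v => Odd (ht v)) w * M) (botI α) J = M (botI α) J := by
  rw [Matrix.mul_apply]
  simp [EM_bot h]

lemma DM_strict (ht : α → ℕ) (p q : ℚ) (I J : Idl α) (h : (1 - DM ht p q) I J ≠ 0) :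
    I.1.card + 1 ≤ J.1.card := by
  by_contra hc
  apply h
  rw [Matrix.sub_apply, Matrix.one_apply]
  unfold DM
  by_cases hIJ : I = J
  · subst hIJ; simp
  · rw [if_neg hIJ, if_neg, sub_zero]
    rintro ⟨h1, -⟩
    apply hIJ
    exact Subtype.ext (Finset.eq_of_subset_of_card_le h1 (by omega))

lemma DM_pow_strict (ht : α → ℕ) (p q : ℚ) (k : ℕ) : ∀ (I J : Idl α),
    ((1 - DM ht p q) ^ k) I J ≠ 0 → I.1.card + k ≤ J.1.card := by
  induction k with
  | zero =>
    intro I J h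
    rw [pow_zero, Matrix.one_apply] at h
    have : I = J := by by_contra hc; exact h (if_neg hc)
    subst this; simp
  | succ k ih =>
    intro I J h
    rw [pow_succ, Matrix.mul_apply] at h
    obtain ⟨K, -, hK⟩ := Finset.exists_ne_zero_of_sum_ne_zero h
    have := ih I K (left_ne_zero_of_mul hK)
    have := DM_strict ht p q K J (right_ne_zero_of_mul hK)
    omega

lemma DM_nilp (ht : α → ℕ) (p q : ℚ) (k : ℕ) (hk : Fintype.card α < k) :
    (1 - DM ht p q) ^ k = 0 := by
  ext I J
  by_contra h
  have := DM_pow_strict ht p q k I J h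
  have := J.1.card_le_univ
  omega

/-- Partial products of the transfer matrices. -/
def PM (ht : α → ℕ) (p q : ℕ → ℚ) : ℕ → Matrix (Idl α) (Idl α) ℚ
  | 0 => 1
  | N + 1 => PM ht p q N * DM ht (p N) (q N)

lemma PM_congr (ht : α → ℕ) (p q p' q' : ℕ → ℚ) (N : ℕ) (hp : ∀ k < N, p k = p' k)
    (hq : ∀ k < N, q k = q' k) : PM ht p q N = PM ht p' q' N := by
  induction N with
  | zero => rfl
  | succ N ih =>
    simp only [PM]
    rw [ih (fun k hk => hp k (by omega)) (fun k hk => hq k (by omega)), hp N (by omega),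
      hq N (by omega)]

/-- Order condition restricted to a set. -/
def OC (ht : α → ℕ) (I : Finset α) (r : α → ℕ) : Prop :=
  ∀ x ∈ I, ∀ y ∈ I, x < y → r x ≤ r y ∧ (Odd (ht x) → r x < r y)

/-- Labelings of an ideal, extended by zero. -/
def Lab (I : Finset α) (N : ℕ) : Finset (α → ℕ) :=
  Fintype.piFinset (fun v => if v ∈ I then Finset.range N else {0})

lemma mem_Lab {I : Finset α} {N : ℕ} {r : α → ℕ} :
    r ∈ Lab I N ↔ (∀ v ∈ I, r v < N) ∧ (∀ v, v ∉ I → r v = 0) := by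
  unfold Lab
  rw [Fintype.mem_piFinset]
  constructor
  · intro h
    exact ⟨fun v hv => by simpa [hv] using h v, fun v hv => by simpa [hv] using h v⟩
  · rintro ⟨h1, h2⟩ v
    by_cases hv : v ∈ I
    · simpa [hv] using h1 v hv
    · simpa [hv] using h2 v hv

lemma PM_eq (ht : α → ℕ) (p q : ℕ → ℚ) (N : ℕ) : ∀ J : Idl α,
    PM ht p q N (botI α) J = ∑ r ∈ (Lab J.1 N).filter (OC ht J.1),
      ∏ v ∈ J.1, (if Even (ht v) then p (r v) else q (r v)) := by
  induction N with
  | zero =>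
    intro J
    simp only [PM]
    rw [Matrix.one_apply]
    by_cases hJ : botI α = J
    · subst hJ
      rw [if_pos rfl]
      have : (Lab (botI α).1 0).filter (OC ht (botI α).1) = {fun _ => 0} := by
        ext r
        rw [Finset.mem_filter, mem_Lab, Finset.mem_singleton]
        simp [botI, OC, funext_iff]
      rw [this]
      simp [botI]
    · rw [if_neg hJ]
      symm
      apply Finset.sum_eq_zero
      intro r hr
      exfalso
      rw [Finset.mem_filter, mem_Lab] at hr
      apply hJ
      apply Subtype.ext
      symm
      apply Finset.eq_empty_of_forall_notMem
      intro v hv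
      exact absurd (hr.1.1 v hv) (by omega)
  | succ N ih =>
    intro J
    simp only [PM]
    rw [Matrix.mul_apply]
    have e : ∀ I : Idl α, PM ht p q N (botI α) I * DM ht (p N) (q N) I J =
        ∑ r ∈ (Lab I.1 N).filter (fun r => OC ht I.1 r ∧ (I.1 ⊆ J.1 ∧
          ∀ x ∈ J.1 \ I.1, ∀ y ∈ J.1 \ I.1, x < y → ¬ Odd (ht x))),
          (∏ v ∈ I.1, (if Even (ht v) then p (r v) else q (r v))) *
          ∏ v ∈ J.1 \ I.1, (if Even (ht v) then p N else q N) := by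
      intro I
      rw [ih I]
      unfold DM
      split_ifs with hc
      · rw [Finset.sum_mul]
        apply Finset.sum_congr _ (fun _ _ => rfl)
        ext r
        rw [Finset.mem_filter, Finset.mem_filter]
        exact ⟨fun h => ⟨h.1, h.2, hc⟩, fun h => ⟨h.1, h.2.1⟩⟩
      · rw [mul_zero]
        symm
        apply Finset.sum_eq_zero
        intro r hr
        exact absurd (Finset.mem_filter.1 hr).2.2 hc
    rw [Finset.sum_congr rfl (fun I _ => e I), Finset.sum_sigma']
    have hlow : ∀ r : α → ℕ, OC ht J.1 r →
        IsLowerSet ((J.1.filter (fun v => r v < N) : Finset α) : Set α) := by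
      intro r hr y x hxy hy
      rcases eq_or_lt_of_le hxy with rfl | hlt
      · exact hy
      rw [Finset.mem_coe, Finset.mem_filter] at hy ⊢
      have hx := J.2 hxy hy.1
      exact ⟨hx, lt_of_le_of_lt (hr x hx y hy.1 hlt).1 hy.2⟩
    symm
    refine Finset.sum_bij (fun r hr => ⟨⟨J.1.filter (fun v => r v < N),
      hlow r (Finset.mem_filter.1 hr).2⟩, fun v => if v ∈ J.1 ∧ r v < N then r v else 0⟩)
      ?_ ?_ ?_ ?_
    · intro r hr
      rw [Finset.mem_filter, mem_Lab] at hr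
      obtain ⟨⟨h1, h2⟩, h3⟩ := hr
      simp only [Finset.mem_sigma, Finset.mem_univ, true_and, Finset.mem_filter, mem_Lab]
      refine ⟨⟨?_, ?_⟩, ?_, ?_, ?_⟩
      · intro v hv; rw [if_pos hv]; exact hv.2
      · intro v hv; rw [if_neg hv]
      · intro x hx y hy hxy
        rw [Finset.mem_filter] at hx hy
        simp only [if_pos hx, if_pos hy]
        exact h3 x hx.1 y hy.1 hxy
      · exact Finset.filter_subset _ _
      · intro x hx y hy hxy hox
        simp only [Finset.mem_sdiff, Finset.mem_filter, not_and, not_lt] at hx hy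
        have := (h3 x hx.1 y hy.1 hxy).2 hox
        have := h1 y hy.1
        have := hx.2 hx.1
        omega
    · intro r hr r' hr' he
      rw [Finset.mem_filter, mem_Lab] at hr hr'
      simp only [Sigma.mk.injEq, Subtype.mk.injEq, heq_eq_eq] at he
      obtain ⟨he1, he2⟩ := he
      funext v
      have a1 := Finset.ext_iff.1 he1 v
      have a2 := congrFun he2 v
      simp only [Finset.mem_filter] at a1
      by_cases hv : v ∈ J.1
      · have b1 := hr.1.1 v hv
        have b2 := hr'.1.1 v hv
        by_cases h1 : r v < N
        · have h2 : r' v < N := by tauto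
          simpa [hv, h1, h2] using a2
        · have h2 : ¬ r' v < N := by tauto
          omega
      · rw [hr.1.2 v hv, hr'.1.2 v hv]
    · rintro ⟨I, s⟩ hs
      simp only [Finset.mem_sigma, Finset.mem_univ, true_and, Finset.mem_filter, mem_Lab] at hs
      obtain ⟨⟨h1, h2⟩, h3, h4, h5⟩ := hs
      have hr : (fun v => if v ∈ I.1 then s v else if v ∈ J.1 then N else 0) ∈
          (Lab J.1 (N + 1)).filter (OC ht J.1) := by
        rw [Finset.mem_filter, mem_Lab]
        refine ⟨⟨?_, ?_⟩, ?_⟩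
        · intro v hv
          by_cases hI : v ∈ I.1
          · have := h1 v hI
            simp only [hI, if_true]; omega
          · simp [hI, hv]
        · intro v hv
          have hI : v ∉ I.1 := fun hI => hv (h4 hI)
          simp [hI, hv]
        · intro x hx y hy hxy
          by_cases hyI : y ∈ I.1
          · have hxI : x ∈ I.1 := I.2 hxy.le hyI
            simp only [hxI, hyI, if_true]
            exact h3 x hxI y hyI hxy
          · by_cases hxI : x ∈ I.1
            · have := h1 x hxI
              simp only [hxI, hyI, hy, if_true, if_false]
              exact ⟨this.le, fun _ => this⟩
            · simp only [hxI, hyI, hx, hy, if_true, if_false]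
              exact ⟨le_rfl, fun ho => absurd ho
                (h5 x (Finset.mem_sdiff.2 ⟨hx, hxI⟩) y (Finset.mem_sdiff.2 ⟨hy, hyI⟩) hxy)⟩
      refine ⟨_, hr, ?_⟩
      have hmem : ∀ v, (v ∈ J.1 ∧ (if v ∈ I.1 then s v else if v ∈ J.1 then N else 0) < N) ↔
          v ∈ I.1 := by
        intro v
        by_cases hI : v ∈ I.1
        · simp [hI, h4 hI, h1 v hI]
        · by_cases hJ : v ∈ J.1 <;> simp [hI, hJ]
      simp only [Sigma.mk.injEq, heq_eq_eq]
      constructor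
      · apply Subtype.ext
        ext v
        simp only [Finset.mem_filter]
        exact hmem v
      · funext v
        simp only [hmem]
        by_cases hI : v ∈ I.1
        · simp [hI]
        · simp [hI, h2 v hI]
    · intro r hr
      rw [Finset.mem_filter, mem_Lab] at hr
      have hsub : J.1.filter (fun v => r v < N) ⊆ J.1 := Finset.filter_subset _ _
      rw [← Finset.prod_sdiff hsub, mul_comm]
      congr 1
      · apply Finset.prod_congr rfl
        intro v hv
        rw [Finset.mem_filter] at hv
        simp only [if_pos hv]
      · apply Finset.prod_congr rfl
        intro v hv
        simp only [Finset.mem_sdiff, Finset.mem_filter, not_and, not_lt] at hv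
        have a := hr.1.1 v hv.1
        have b := hv.2 hv.1
        have : r v = N := by omega
        rw [this]

lemma PM_top (ht : α → ℕ) (p q : ℕ → ℚ) (N : ℕ) :
    PM ht p q N (botI α) (topI α) = ∑ r : α → Fin N, if OrderCond ht r then
      ∏ v, (if Even (ht v) then p (r v) else q (r v)) else 0 := by
  rw [PM_eq, ← Finset.sum_filter]
  symm
  refine Finset.sum_bij (fun r _ v => (r v : ℕ)) ?_ ?_ ?_ ?_
  · intro r hr
    rw [Finset.mem_filter] at hr
    rw [Finset.mem_filter, mem_Lab]
    refine ⟨⟨fun v _ => (r v).2, fun v hv => absurd (Finset.mem_univ v) hv⟩, ?_⟩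
    intro x _ y _ hxy
    exact ⟨hr.2.1 x y hxy.le, hr.2.2 x y hxy⟩
  · intro r _ r' _ he
    funext v
    exact Fin.ext (congrFun he v)
  · intro s hs
    rw [Finset.mem_filter, mem_Lab] at hs
    have hm : ∀ v, v ∈ (topI α).1 := fun v => Finset.mem_univ v
    refine ⟨fun v => ⟨s v, hs.1.1 v (hm v)⟩, ?_, rfl⟩
    rw [Finset.mem_filter]
    refine ⟨Finset.mem_univ _, ?_, ?_⟩
    · intro x y hxy
      rcases eq_or_lt_of_le hxy with rfl | hlt
      · exact le_rfl
      · exact (hs.2 x (hm x) y (hm y) hlt).1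
    · intro x y hxy ho
      exact (hs.2 x (hm x) y (hm y) hxy).2 ho
  · intro r _
    rfl

lemma eval_FP (ht : α → ℕ) (y : ℕ → ℚ) (N : ℕ) :
    PM ht (fun k => - y k) y N (botI α) (topI α) =
      (-1) ^ (Finset.univ.filter (fun v => Even (ht v))).card * eval y (FP α ht N) := by
  rw [PM_top]
  unfold FP
  rw [map_sum, Finset.mul_sum]
  apply Finset.sum_congr rfl
  intro r _
  split_ifs with h
  · rw [map_prod]
    simp only [eval_X]
    rw [← Finset.prod_const, Finset.prod_filter, ← Finset.prod_mul_distrib]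
    apply Finset.prod_congr rfl
    intro v _
    split_ifs <;> simp
  · simp

lemma eval_NP (ht : α → ℕ) (g : ℕ ⊕ ℕ → ℚ) (m : ℕ) :
    eval g (NP α ht m) = PM ht (fun k => g (Sum.inl k))
      (fun k => if k < m then g (Sum.inr k) else 0) (m + 1) (botI α) (topI α) := by
  rw [PM_top]
  unfold NP
  rw [map_sum]
  apply Finset.sum_congr rfl
  intro r _
  by_cases h : OrderCond ht r
  · rw [if_pos h]
    by_cases h2 : ∀ v, Odd (ht v) → (r v : ℕ) < m
    · rw [if_pos ⟨h, h2⟩, map_prod]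
      apply Finset.prod_congr rfl
      intro v _
      split_ifs with h3 h4
      · simp
      · simp
      · exact absurd (h2 v (Nat.not_even_iff_odd.1 h3)) h4
    · rw [if_neg (fun h' => h2 h'.2), map_zero]
      push Not at h2
      obtain ⟨v, hv, hm⟩ := h2
      symm
      apply Finset.prod_eq_zero (Finset.mem_univ v)
      rw [if_neg (Nat.not_even_iff_odd.2 hv), if_neg (by omega)]
  · rw [if_neg h, if_neg (fun h' => h h'.1), map_zero]

lemma NP_ones_nonneg (ht : α → ℕ) (m : ℕ) : 0 ≤ eval (fun _ => (1 : ℚ)) (NP α ht m) := by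
  unfold NP
  rw [map_sum]
  apply Finset.sum_nonneg
  intro r _
  split_ifs
  · rw [map_prod]
    apply Finset.prod_nonneg
    intro v _
    split_ifs <;> simp
  · simp

lemma ht_strict {ht : α → ℕ} (h : IsRanked ht) : StrictMono ht := by
  intro x y
  induction x using WellFoundedGT.induction with
  | _ x ih =>
    intro hxy
    obtain ⟨z, h1, h2, h3⟩ := ht_lt h x y hxy
    rcases eq_or_lt_of_le h2 with rfl | hlt
    · omega
    · have := ih z h1 hlt
      omega

lemma NP_ones_pos {ht : α → ℕ} (h : IsRanked ht) :
    ∃ M, ∀ m, M ≤ m → 0 < eval (fun _ => (1 : ℚ)) (NP α ht m) := by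
  refine ⟨(∑ v, ht v) + 1, fun m hm => ?_⟩
  have hb : ∀ v, ht v / 2 < m := by
    intro v
    have := Finset.single_le_sum (f := ht) (fun _ _ => Nat.zero_le _) (Finset.mem_univ v)
    omega
  unfold NP
  rw [map_sum]
  apply Finset.sum_pos'
  · intro r _
    split_ifs
    · rw [map_prod]
      apply Finset.prod_nonneg
      intro v _
      split_ifs <;> simp
    · simp
  · refine ⟨fun v => ⟨ht v / 2, by have := hb v; omega⟩, Finset.mem_univ _, ?_⟩
    rw [if_pos, map_prod]
    · apply Finset.prod_pos
      intro v _
      split_ifs <;> simp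
    · refine ⟨⟨?_, ?_⟩, fun v _ => hb v⟩
      · intro x y hxy
        rw [Fin.mk_le_mk]
        exact Nat.div_le_div_right ((ht_strict h).monotone hxy)
      · intro x y hxy ho
        rw [Fin.mk_lt_mk]
        have := ht_strict h hxy
        obtain ⟨k, hk⟩ := ho
        omega

end transfer

section main
variable {α β : Type} [Fintype α] [PartialOrder α] [Fintype β] [PartialOrder β]

/-- The pair of one-alphabet transfer matrices. -/
def CC (ht : α → ℕ) (ht' : β → ℕ) (y : ℚ) :
    Matrix (Idl α) (Idl α) ℚ × Matrix (Idl β) (Idl β) ℚ :=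
  (DM ht (-y) y, DM ht' (-y) y)

lemma DM_zero {ht : α → ℕ} (h : IsRanked ht) : DM ht (-0) 0 = 1 := by
  rw [← EM_mul_EM h, neg_zero, EM_zero, EM_zero, mul_one]

lemma mem_closure_CC {ht : α → ℕ} {ht' : β → ℕ} (hα : IsRanked ht) (hβ : IsRanked ht')
    (g : Matrix (Idl α) (Idl α) ℚ × Matrix (Idl β) (Idl β) ℚ)
    (hg : g ∈ Submonoid.closure (Set.range (CC ht ht'))) :
    ∃ (N : ℕ) (y : ℕ → ℚ), 1 ≤ N ∧ g = (PM ht (fun k => - y k) y N, PM ht' (fun k => - y k) y N) := by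
  induction hg using Submonoid.closure_induction_right with
  | one =>
    refine ⟨1, fun _ => 0, le_rfl, ?_⟩
    simp only [PM]
    rw [DM_zero hα, DM_zero hβ, mul_one, mul_one]
    rfl
  | mul_right x hx y hy ih =>
    obtain ⟨N, w, hN, rfl⟩ := ih
    obtain ⟨t, rfl⟩ := hy
    refine ⟨N + 1, Function.update w N t, by omega, ?_⟩
    have hw : ∀ k < N, Function.update w N t k = w k := fun k hk =>
      Function.update_of_ne (by omega) _ _
    simp only [PM, CC, Prod.mk_mul_mk, Function.update_self]
    rw [PM_congr ht _ _ (fun k => - w k) w N (fun k hk => by rw [hw k hk]) hw,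
      PM_congr ht' _ _ (fun k => - w k) w N (fun k hk => by rw [hw k hk]) hw]

/-- The sign. -/
def sg (ht : α → ℕ) : ℚ := (-1) ^ (Finset.univ.filter (fun v => Even (ht v))).card

/-- The two-poset functional, vanishing on the algebra generated by the `CC y`. -/
lemma functional {ht : α → ℕ} {ht' : β → ℕ} (hα : IsRanked ht) (hβ : IsRanked ht')
    (heq : ∀ N : ℕ, 1 ≤ N → FP α ht N = FP β ht' N)
    (g : Matrix (Idl α) (Idl α) ℚ × Matrix (Idl β) (Idl β) ℚ)
    (hg : g ∈ Algebra.adjoin ℚ (Set.range (CC ht ht'))) :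
    sg ht * g.1 (botI α) (topI α) = sg ht' * g.2 (botI β) (topI β) := by
  rw [← Subalgebra.mem_toSubmodule, Algebra.adjoin_eq_span] at hg
  induction hg using Submodule.span_induction with
  | mem x hx =>
    obtain ⟨N, y, hN, rfl⟩ := mem_closure_CC hα hβ x hx
    simp only
    rw [eval_FP, eval_FP, heq N hN, ← mul_assoc, ← mul_assoc]
    unfold sg
    rw [← pow_add, ← pow_add, Even.neg_one_pow ⟨_, rfl⟩, Even.neg_one_pow ⟨_, rfl⟩]
  | zero => simp
  | add x y _ _ hx hy =>
    simp only [Prod.fst_add, Prod.snd_add, Matrix.add_apply, mul_add, hx, hy]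
  | smul a x _ hx =>
    simp only [Prod.smul_fst, Prod.smul_snd, Matrix.smul_apply, smul_eq_mul]
    linear_combination a * hx

/-- Inverse of `DM (-x) x`. -/
def DI (ht : α → ℕ) (x : ℚ) : Matrix (Idl α) (Idl α) ℚ :=
  EM (fun v => Odd (ht v)) (-x) * EM (fun v => Even (ht v)) x

lemma DI_eq {ht : α → ℕ} (h : IsRanked ht) (x : ℚ) (k : ℕ) (hk : Fintype.card α < k) :
    DI ht x = ∑ i ∈ Finset.range k, (1 - DM ht (-x) x) ^ i := by
  have h1 : DI ht x * DM ht (-x) x = 1 := by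
    rw [← EM_mul_EM h]
    unfold DI
    rw [mul_assoc, ← mul_assoc (EM (fun v => Even (ht v)) x), EM_mul _ (alt_even h),
      add_neg_cancel, EM_zero, one_mul, EM_mul _ (alt_odd h), neg_add_cancel, EM_zero]
  have h2 := mul_neg_geom_sum (1 - DM ht (-x) x) k
  rw [DM_nilp ht (-x) x k hk, sub_sub_cancel, sub_zero] at h2
  calc DI ht x = DI ht x * (DM ht (-x) x * ∑ i ∈ Finset.range k, (1 - DM ht (-x) x) ^ i) := by
        rw [h2, mul_one]
    _ = _ := by rw [← mul_assoc, h1, one_mul]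

lemma DI_mem {ht : α → ℕ} {ht' : β → ℕ} (hα : IsRanked ht) (hβ : IsRanked ht') (x : ℚ) :
    (DI ht x, DI ht' x) ∈ Algebra.adjoin ℚ (Set.range (CC ht ht')) := by
  have : (DI ht x, DI ht' x) =
      ∑ i ∈ Finset.range (Fintype.card α + Fintype.card β + 1), (1 - CC ht ht' x) ^ i := by
    rw [DI_eq hα x (Fintype.card α + Fintype.card β + 1) (by omega),
      DI_eq hβ x (Fintype.card α + Fintype.card β + 1) (by omega)]
    ext1
    · rw [Prod.fst_sum]; rfl
    · rw [Prod.snd_sum]; rfl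
  rw [this]
  apply Subalgebra.sum_mem
  intro i _
  apply Subalgebra.pow_mem
  apply Subalgebra.sub_mem
  · exact Subalgebra.one_mem _
  · exact Algebra.subset_adjoin ⟨x, rfl⟩

lemma PM_step {ht : α → ℕ} (h : IsRanked ht) (p q Z : ℕ → ℚ) (N : ℕ)
    (hZ : ∀ k, Z (k + 1) = Z k - p k - q k) :
    EM (fun v => Odd (ht v)) (- Z 0) * PM ht p q (N + 1) * EM (fun v => Odd (ht v)) (Z (N + 1)) =
    (EM (fun v => Odd (ht v)) (- Z 0) * PM ht p q N * EM (fun v => Odd (ht v)) (Z N)) *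
      (DI ht (Z N) * DM ht (- (Z N - p N)) (Z N - p N)) := by
  have e1 : EM (fun v => Even (ht v)) (p N) =
      EM (fun v => Even (ht v)) (Z N) * EM (fun v => Even (ht v)) (- (Z N - p N)) := by
    rw [EM_mul _ (alt_even h)]; congr 1; ring
  have e2 : EM (fun v => Odd (ht v)) (q N) * EM (fun v => Odd (ht v)) (Z (N + 1)) =
      EM (fun v => Odd (ht v)) (Z N - p N) := by
    rw [EM_mul _ (alt_odd h), hZ]; congr 1; ring
  have e3 : EM (fun v => Odd (ht v)) (Z N) * EM (fun v => Odd (ht v)) (- Z N) = 1 := by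
    rw [EM_mul _ (alt_odd h), add_neg_cancel, EM_zero]
  simp only [PM]
  rw [← EM_mul_EM h, ← EM_mul_EM h]
  unfold DI
  rw [← e2, e1]
  simp only [mul_assoc]
  rw [← mul_assoc (EM (fun v => Odd (ht v)) (Z N)), e3, one_mul]

lemma PM_mem {ht : α → ℕ} {ht' : β → ℕ} (hα : IsRanked ht) (hβ : IsRanked ht') (p q Z : ℕ → ℚ)
    (hZ : ∀ k, Z (k + 1) = Z k - p k - q k) (N : ℕ) :
    (EM (fun v => Odd (ht v)) (- Z 0) * PM ht p q N * EM (fun v => Odd (ht v)) (Z N),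
     EM (fun v => Odd (ht' v)) (- Z 0) * PM ht' p q N * EM (fun v => Odd (ht' v)) (Z N)) ∈
      Algebra.adjoin ℚ (Set.range (CC ht ht')) := by
  induction N with
  | zero =>
    simp only [PM, mul_one]
    rw [EM_mul _ (alt_odd hα), EM_mul _ (alt_odd hβ), neg_add_cancel, EM_zero, EM_zero]
    exact Subalgebra.one_mem _
  | succ N ih =>
    rw [PM_step hα p q Z N hZ, PM_step hβ p q Z N hZ]
    have h1 : CC ht ht' (Z N - p N) ∈ Algebra.adjoin ℚ (Set.range (CC ht ht')) :=
      Algebra.subset_adjoin ⟨Z N - p N, rfl⟩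
    have h2 := Subalgebra.mul_mem _ ih (Subalgebra.mul_mem _ (DI_mem hα hβ (Z N)) h1)
    simp only [CC, Prod.mk_mul_mk] at h2
    exact h2

lemma PM_rel {ht : α → ℕ} {ht' : β → ℕ} (hα : IsRanked ht) (hβ : IsRanked ht')
    (heq : ∀ N : ℕ, 1 ≤ N → FP α ht N = FP β ht' N) (p q : ℕ → ℚ) (N : ℕ) :
    sg ht * PM ht p q N (botI α) (topI α) = sg ht' * PM ht' p q N (botI β) (topI β) := by
  have := functional hα hβ heq _ (PM_mem hα hβ p q
    (fun k => (∑ j ∈ Finset.range N, (p j + q j)) - ∑ j ∈ Finset.range k, (p j + q j))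
    (fun k => by simp only [Finset.sum_range_succ]; ring) N)
  simp only [sub_self, EM_zero, mul_one] at this
  rwa [EM_bot_mul hα, EM_bot_mul hβ] at this

lemma sg_sq (ht : α → ℕ) : sg ht = 1 ∨ sg ht = -1 := neg_one_pow_eq_or _ _

lemma sg_eq {ht : α → ℕ} {ht' : β → ℕ} (hα : IsRanked ht) (hβ : IsRanked ht')
    (heq : ∀ N : ℕ, 1 ≤ N → FP α ht N = FP β ht' N) : sg ht = sg ht' := by
  obtain ⟨M, hM⟩ := NP_ones_pos hα
  have h1 := hM M le_rfl
  have h2 := NP_ones_nonneg ht' M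
  rw [eval_NP] at h1 h2
  have h3 := PM_rel hα hβ heq (fun _ => 1) (fun k => if k < M then 1 else 0) (M + 1)
  rcases sg_sq ht with h | h <;> rcases sg_sq ht' with h' | h' <;> rw [h, h'] at h3 ⊢ <;> linarith

end main

/-- If two finite ranked posets have the same generating functions
`F^(N)` for every `N ≥ 1`, then they have the same generating functions `N^(m)` for
every `m ≥ 0`. -/
theorem stmt12 (α β : Type) [Fintype α] [PartialOrder α] [Fintype β] [PartialOrder β]
    (ht : α → ℕ) (ht' : β → ℕ) (hα : IsRanked ht) (hβ : IsRanked ht')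
    (heq : ∀ N : ℕ, 1 ≤ N → FP α ht N = FP β ht' N) :
    ∀ m : ℕ, NP α ht m = NP β ht' m := by
  intro m
  apply MvPolynomial.funext
  intro g
  have h := PM_rel hα hβ heq (fun k => g (Sum.inl k))
    (fun k => if k < m then g (Sum.inr k) else 0) (m + 1)
  rw [eval_NP, eval_NP]
  rw [sg_eq hα hβ heq] at h
  rcases sg_sq ht' with h' | h' <;> rw [h'] at h <;> linarith
end
end
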